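/- arXiv:1505.05626 — 7 statements merged into one kernel-verified Lean document; each statement's English description precedes it below -/
import Mathlib

section
/- Let V be a finite-dimensional complex vector space and W a finite complex reflection subgroup of GL(V). Then the action of W on V^reg is free: if v ∈ V^reg and w ∈ W satisfy w·v = v, then w is the identity. -/
open Module

/-- A complex reflection: an element of `GL(V)` of finite order, not the identity,
whose fixed-point set is a hyperplane (a codimension-one linear subspace). -/
def IsComplexReflection {V : Type*} [AddCommGroup V] [Module ℂ V]
    (s : V ≃ₗ[ℂ] V) : Prop :=
  IsOfFinOrder s ∧ s ≠ 1 ∧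
    finrank ℂ (LinearMap.ker ((s : V →ₗ[ℂ] V) - LinearMap.id)) + 1 = finrank ℂ V

/-!
For a reflection `s` with hyperplane `l = 0` and a polynomial function `f` of degree at most
`k + 1`, the divided difference `h = (f ∘ s - f) / l` is polynomial of degree at most `k`. If `v`
lies on no reflecting hyperplane, then `l` has no zero on the orbit `W v`, so `h` vanishes on `W v`
whenever `f` does. Induction on the degree then shows that `w ∈ W` with `w v = v` acts trivially on
the first-order jet at `v` of every polynomial function `f` vanishing on `W v`: by the induction
hypothesis for the divided differences, the jets at `v` of `f ∘ g ∘ w` and `f ∘ g` differ by an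
amount independent of `g ∈ W`, and summing this over the powers `g` of `w` telescopes to zero. Since
the orbit is finite, these jets include all linear forms, whence `w = 1`.

First-order jets are encoded by evaluating at points `x + ε u` over the dual numbers `K[ε]`; such a
point is the pair `(x, u) : V × V`.
-/

open scoped DualNumber

section Algebra

theorem exists_mul_eq_map_sub_of_mem_pow_succ {R A : Type*} [CommRing R] [CommRing A] [Algebra R A]
    {M : Submodule R A} {σ : A →ₐ[R] A} {a : A} (hM : M.map σ.toLinearMap ≤ M)
    (hσ : ∀ m ∈ M, ∃ c : R, σ m - m = c • a) {k : ℕ} {f : A} (hf : f ∈ M ^ (k + 1)) :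
    ∃ h ∈ M ^ k, σ f - f = a * h := by
  induction k generalizing f with
  | zero =>
    obtain ⟨c, hc⟩ := hσ f (by simpa using hf)
    exact ⟨algebraMap R A c, Submodule.algebraMap_mem c, by rw [hc, Algebra.smul_def, mul_comm]⟩
  | succ k ih =>
    rw [pow_succ] at hf
    induction hf using Submodule.mul_induction_on' with
    | mem_mul_mem p hp m hm =>
      obtain ⟨h, hh, hph⟩ := ih hp
      obtain ⟨c, hc⟩ := hσ m hm
      have hσp : σ p ∈ M ^ (k + 1) := by
        have hle : (M ^ (k + 1)).map σ.toLinearMap ≤ M ^ (k + 1) := by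
          rw [Submodule.map_pow]
          exact pow_le_pow_left' hM _
        exact hle (Submodule.mem_map_of_mem hp)
      refine ⟨c • σ p + h * m, add_mem (Submodule.smul_mem _ _ hσp) ?_, ?_⟩
      · rw [pow_succ]
        exact Submodule.mul_mem_mul hh hm
      · calc σ (p * m) - p * m = σ p * (σ m - m) + (σ p - p) * m := by rw [map_mul]; ring
          _ = a * (c • σ p + h * m) := by
            rw [hc, hph, mul_add, mul_smul_comm, mul_smul_comm, mul_comm (σ p), mul_assoc]
    | add p _ q _ hp hq =>
      obtain ⟨h₁, hh₁, h₁p⟩ := hp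
      obtain ⟨h₂, hh₂, h₂q⟩ := hq
      exact ⟨h₁ + h₂, add_mem hh₁ hh₂, by rw [map_add, add_sub_add_comm, h₁p, h₂q, mul_add]⟩

theorem apply_eq_apply_one_of_mem_closure {G α : Type*} [Group G] {T : Set G} {φ : G → α}
    (hφ : ∀ s ∈ T, ∀ g ∈ Subgroup.closure T, φ (s * g) = φ g) {g : G}
    (hg : g ∈ Subgroup.closure T) : φ g = φ 1 := by
  induction hg using Subgroup.closure_induction_left with
  | one => rfl
  | mul_left s hs g hg ih => rw [hφ s hs g hg, ih]
  | inv_mul_cancel s hs g hg ih =>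
    rw [← hφ s hs _ (mul_mem (inv_mem (Subgroup.subset_closure hs)) hg), mul_inv_cancel_left, ih]

theorem apply_smul_eq_of_forall_pow_smul_sub_eq {K E G X : Type*} [DivisionRing K] [AddCommGroup E]
    [Module K E] [Group G] [MulAction G X] {F : X → E} {w : G} {x : X}
    (hw : (orderOf w : K) ≠ 0)
    (hF : ∀ j : ℕ, F (w ^ j • w • x) - F (w ^ j • x) = F (w • x) - F x) : F (w • x) = F x := by
  have htelescope : (orderOf w : K) • (F (w • x) - F x) = 0 :=
    calc (orderOf w : K) • (F (w • x) - F x)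
      _ = ∑ j ∈ Finset.range (orderOf w), (F (w ^ (j + 1) • x) - F (w ^ j • x)) := by
        simp only [pow_succ, mul_smul, hF, Finset.sum_const, Finset.card_range,
          Nat.cast_smul_eq_nsmul]
      _ = 0 := by
        rw [Finset.sum_range_sub (fun j ↦ F (w ^ j • x)), pow_orderOf_eq_one, pow_zero, sub_self]
  exact sub_eq_zero.mp ((smul_eq_zero.mp htelescope).resolve_left hw)

theorem dualNumber_mul_eq_mul_of_fst_eq {R : Type*} [Semiring R] {a b c : R[ε]}
    (hab : a.fst = b.fst) (hc : c.fst = 0) : a * c = b * c := by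
  ext <;> simp [hab, hc]

end Algebra

section Dilatransvection

variable {R V : Type*} [CommRing R] [AddCommGroup V] [Module R V]

theorem mul_mul_inv_mem_dilatransvections {s : V ≃ₗ[R] V}
    (hs : s ∈ LinearEquiv.dilatransvections R V) (g : V ≃ₗ[R] V) :
    g * s * g⁻¹ ∈ LinearEquiv.dilatransvections R V := by
  obtain ⟨l, a, hla⟩ := hs
  have hs_apply (x : V) : s x = x + l x • a := LinearMap.congr_fun hla x
  refine ⟨l ∘ₗ (g⁻¹ : V ≃ₗ[R] V), g a, LinearMap.ext fun x ↦ ?_⟩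
  simp [LinearMap.transvection.apply, hs_apply]

/-- The points of `V^reg`, for an arbitrary linear group `W`: those which lie on no reflecting
hyperplane of `W`. A reflection is encoded as a dilatransvection other than `1`, so that the notion
makes sense over any ring and in any dimension. -/
def IsRegularPoint (W : Subgroup (V ≃ₗ[R] V)) (v : V) : Prop :=
  ∀ s ∈ W, s ∈ LinearEquiv.dilatransvections R V → s v = v → s = 1

theorem IsRegularPoint.apply {W : Subgroup (V ≃ₗ[R] V)} {v : V} (hv : IsRegularPoint W v)
    {g : V ≃ₗ[R] V} (hg : g ∈ W) : IsRegularPoint W (g v) := by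
  intro s hsW hs hfix
  have hconj_fix : (g⁻¹ * s * g⁻¹⁻¹) • v = v := by
    rw [inv_inv, mul_smul, mul_smul, inv_smul_eq_iff]
    exact hfix
  have hconj : g⁻¹ * s * g⁻¹⁻¹ = 1 :=
    hv _ (mul_mem (mul_mem (inv_mem hg) hsW) (inv_mem (inv_mem hg)))
      (mul_mul_inv_mem_dilatransvections hs g⁻¹) hconj_fix
  exact conj_eq_one_iff.mp hconj

theorem IsRegularPoint.dual_apply_ne_zero {W : Subgroup (V ≃ₗ[R] V)} {v : V}
    (hv : IsRegularPoint W v) {s : V ≃ₗ[R] V} (hsW : s ∈ W) (hs1 : s ≠ 1) {l : Dual R V} {a : V}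
    (hs : (s : V →ₗ[R] V) = LinearMap.transvection l a) : l v ≠ 0 := fun hl ↦
  hs1 <| hv s hsW ⟨l, a, hs⟩ <| by
    simpa [LinearMap.transvection.apply, hl] using LinearMap.congr_fun hs v

end Dilatransvection

section Jet

variable {R V : Type*} [CommRing R] [AddCommGroup V] [Module R V]

/-- The affine function `φ` on `V`, evaluated at dual number points: the pair `(x, u) : V × V`
stands for the point `x + ε u`, where `φ` takes the value `φ x + ε (φ.linear u)`. -/
def affineJet : (V →ᵃ[R] R) →ₗ[R] (V × V → R[ε]) where
  toFun φ p := TrivSqZeroExt.inl (φ p.1) + TrivSqZeroExt.inr (φ.linear p.2)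
  map_add' φ ψ := by ext p <;> simp
  map_smul' c φ := by ext p <;> simp

@[simp]
theorem fst_affineJet (φ : V →ᵃ[R] R) (p : V × V) : (affineJet φ p).fst = φ p.1 := by
  simp [affineJet]

@[simp]
theorem snd_affineJet (φ : V →ᵃ[R] R) (p : V × V) : (affineJet φ p).snd = φ.linear p.2 := by
  simp [affineJet]

variable (R V) in
/-- The polynomial functions of degree at most `k` on `V`, evaluated at dual number points as in
`affineJet`: linear combinations of products of `k` affine functions. -/
def polynomialJet (k : ℕ) : Submodule R (V × V → R[ε]) :=
  LinearMap.range (affineJet (R := R) (V := V)) ^ k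

theorem mul_affineJet_mem_polynomialJet_succ {k : ℕ} {f : V × V → R[ε]}
    (hf : f ∈ polynomialJet R V k) (φ : V →ᵃ[R] R) :
    f * affineJet φ ∈ polynomialJet R V (k + 1) :=
  Submodule.mul_mem_mul hf (LinearMap.mem_range_self _ φ)

/-- `h` is a divided difference `(f ∘ s - f) / l` on dual number points, where `l = 0` is meant to
be the hyperplane fixed by `s`. It is determined only where `l` is invertible. -/
def IsDividedDifference (s : V ≃ₗ[R] V) (l : Dual R V) (f h : V × V → R[ε]) : Prop :=
  ∀ p, f (s • p) - f p = affineJet l.toAffineMap p * h p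

theorem exists_isDividedDifference {s : V ≃ₗ[R] V} {l : Dual R V} {a : V}
    (hs : (s : V →ₗ[R] V) = LinearMap.transvection l a) {k : ℕ} {f : V × V → R[ε]}
    (hf : f ∈ polynomialJet R V (k + 1)) :
    ∃ h ∈ polynomialJet R V k, IsDividedDifference s l f h := by
  have hs_apply (x : V) : s x = x + l x • a := LinearMap.congr_fun hs x
  let σ : (V × V → R[ε]) →ₐ[R] (V × V → R[ε]) := AlgHom.pi fun p ↦ Pi.evalAlgHom R _ (s • p)
  have hσ_range : (LinearMap.range affineJet).map σ.toLinearMap ≤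
      LinearMap.range (affineJet (R := R) (V := V)) := by
    rintro _ ⟨_, ⟨φ, rfl⟩, rfl⟩
    exact ⟨φ.comp (s : V →ₗ[R] V).toAffineMap, by ext p <;> simp [σ]⟩
  have hσ_sub : ∀ m ∈ LinearMap.range (affineJet (R := R) (V := V)),
      ∃ c : R, σ m - m = c • affineJet l.toAffineMap := by
    rintro _ ⟨φ, rfl⟩
    refine ⟨φ.linear a, ?_⟩
    have hφ (x y : V) : φ (x + y) = φ.linear y + φ x := by
      simpa [add_comm] using φ.map_vadd x y
    ext p <;> simp [σ, hs_apply, hφ, mul_comm]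
  obtain ⟨h, hh, hfh⟩ := exists_mul_eq_map_sub_of_mem_pow_succ hσ_range hσ_sub hf
  exact ⟨h, hh, congrFun hfh⟩

theorem IsDividedDifference.fst_eq_zero [NoZeroDivisors R] {s : V ≃ₗ[R] V} {l : Dual R V}
    {f h : V × V → R[ε]} (hfh : IsDividedDifference s l f h) {p : V × V} (hl : l p.1 ≠ 0)
    (hfp : (f p).fst = 0) (hfsp : (f (s • p)).fst = 0) : (h p).fst = 0 := by
  have hmul : l p.1 * (h p).fst = 0 := by
    simpa [hfp, hfsp] using (congrArg TrivSqZeroExt.fst (hfh p)).symm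
  exact (mul_eq_zero.mp hmul).resolve_left hl

theorem IsDividedDifference.smul_sub_smul_eq {s : V ≃ₗ[R] V} {l : Dual R V}
    {f h : V × V → R[ε]} (hfh : IsDividedDifference s l f h) {p q : V × V} (hpq : p.1 = q.1)
    (hh : h p = h q) (hq : (h q).fst = 0) : f (s • p) - f (s • q) = f p - f q := by
  rw [sub_eq_sub_iff_sub_eq_sub, hfh, hfh, hh]
  exact dualNumber_mul_eq_mul_of_fst_eq (by simp [hpq]) hq

end Jet

section Separation

variable {K V : Type*} [Field K] [AddCommGroup V] [Module K V]

theorem exists_affineMap_apply_eq_zero_apply_eq_one {x y : V} (hxy : x ≠ y) :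
    ∃ φ : V →ᵃ[K] K, φ x = 0 ∧ φ y = 1 := by
  obtain ⟨l, hl⟩ := Projective.exists_dual_ne_zero K (sub_ne_zero.mpr hxy.symm)
  refine ⟨(l (y - x))⁻¹ • (l.toAffineMap - AffineMap.const K V (l x)), by simp, ?_⟩
  simpa using inv_mul_cancel₀ hl

theorem exists_mem_polynomialJet_fst_eq_zero_fst_eq_one {O : Set V} (hO : O.Finite) {v : V}
    (hv : v ∉ O) :
    ∃ k, ∃ e ∈ polynomialJet K V k,
      (∀ p : V × V, p.1 ∈ O → (e p).fst = 0) ∧ ∀ u, (e (v, u)).fst = 1 := by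
  induction O, hO using Set.Finite.induction_on with
  | empty => exact ⟨0, 1, Submodule.one_le.mp le_rfl, by simp, by simp⟩
  | @insert y O _ _ ih =>
    rw [Set.mem_insert_iff, not_or] at hv
    obtain ⟨k, e, he, heO, hev⟩ := ih hv.2
    obtain ⟨φ, hφy, hφv⟩ := exists_affineMap_apply_eq_zero_apply_eq_one (K := K) (Ne.symm hv.1)
    refine ⟨k + 1, e * affineJet φ, mul_affineJet_mem_polynomialJet_succ he φ, ?_, ?_⟩
    · rintro p (hp | hp)
      · simp [hp, hφy]
      · simp [heO p hp]
    · intro u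
      simp [hev u, hφv]

theorem exists_mem_polynomialJet_fst_eq_zero_snd_eq_dual {O : Set V} (hO : O.Finite) (v : V)
    (l : Dual K V) :
    ∃ k, ∃ f ∈ polynomialJet K V k,
      (∀ p : V × V, p.1 ∈ O → (f p).fst = 0) ∧ ∀ u, (f (v, u)).snd = l u := by
  obtain ⟨k, e, he, heO, hev⟩ := exists_mem_polynomialJet_fst_eq_zero_fst_eq_one (K := K)
    (hO.sdiff (t := {v})) (v := v) (by simp)
  let φ : V →ᵃ[K] K := l.toAffineMap - AffineMap.const K V (l v)
  have hφ_apply (x : V) : φ x = l x - l v := rfl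
  have hφ_linear : φ.linear = l := by simp [φ]
  refine ⟨k + 1, e * affineJet φ, mul_affineJet_mem_polynomialJet_succ he φ, fun p hp ↦ ?_,
    fun u ↦ ?_⟩
  · by_cases hpv : p.1 = v
    · simp [hφ_apply, hpv]
    · simp [heO p ⟨hp, hpv⟩]
  · simp [hφ_apply, hφ_linear, hev]

end Separation

section Freeness

variable {K V : Type*} [Field K] [AddCommGroup V] [Module K V]

theorem polynomialJet_smul_smul_eq_of_fst_eq_zero {W : Subgroup (V ≃ₗ[K] V)}
    (hW : Subgroup.closure (W ∩ LinearEquiv.dilatransvections K V) = W) {p : V × V}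
    (hp : IsRegularPoint W p.1) {w : V ≃ₗ[K] V} (hw : w ∈ W) (hfix : w p.1 = p.1)
    (horder : (orderOf w : K) ≠ 0) {k : ℕ} {f : V × V → K[ε]} (hf : f ∈ polynomialJet K V k)
    (hf0 : ∀ g ∈ W, (f (g • p)).fst = 0) {g : V ≃ₗ[K] V} (hg : g ∈ W) :
    f (g • w • p) = f (g • p) := by
  induction k generalizing f g with
  | zero =>
    obtain ⟨c, rfl⟩ := Submodule.mem_one.mp hf
    rfl
  | succ k ih =>
    have hstep : ∀ s ∈ (W ∩ LinearEquiv.dilatransvections K V : Set (V ≃ₗ[K] V)), ∀ g ∈ W,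
        f ((s * g) • w • p) - f ((s * g) • p) = f (g • w • p) - f (g • p) := by
      rintro s ⟨hsW, l, a, hs⟩ g hg
      obtain rfl | hs1 := eq_or_ne s 1
      · rw [one_mul]
      obtain ⟨h, hh, hfh⟩ := exists_isDividedDifference hs hf
      have hh0 : ∀ g ∈ W, (h (g • p)).fst = 0 := fun g hg ↦
        hfh.fst_eq_zero ((hp.apply hg).dual_apply_ne_zero hsW hs1 hs) (hf0 g hg)
          (by simpa only [mul_smul] using hf0 (s * g) (mul_mem hsW hg))
      rw [mul_smul, mul_smul]
      exact hfh.smul_sub_smul_eq (congrArg g hfix) (ih hh hh0 hg) (hh0 g hg)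
    have hconst : ∀ g ∈ W, f (g • w • p) - f (g • p) = f (w • p) - f p := fun g hg ↦ by
      simpa only [one_smul] using apply_eq_apply_one_of_mem_closure
        (φ := fun g : V ≃ₗ[K] V ↦ f (g • w • p) - f (g • p)) (by rwa [hW]) (by rwa [hW])
    have hwp : f (w • p) = f p :=
      apply_smul_eq_of_forall_pow_smul_sub_eq horder fun j ↦ hconst _ (pow_mem hw j)
    rw [← sub_eq_zero, hconst g hg, hwp, sub_self]

theorem regular_locus_free_general (W : Subgroup (V ≃ₗ[K] V))
    (hW : Subgroup.closure (W ∩ LinearEquiv.dilatransvections K V) = W) (v : V)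
    (hv : IsRegularPoint W v) (horbit : (MulAction.orbit W v).Finite) (w : V ≃ₗ[K] V)
    (hw : w ∈ W) (horder : (orderOf w : K) ≠ 0) (hfix : w v = v) : w = 1 := by
  suffices hdual : ∀ (u : V) (l : Dual K V), l (w u - u) = 0 from
    LinearEquiv.ext fun u ↦ sub_eq_zero.mp ((forall_dual_apply_eq_zero_iff K _).mp (hdual u))
  intro u l
  obtain ⟨k, f, hf, hf0, hfl⟩ := exists_mem_polynomialJet_fst_eq_zero_snd_eq_dual horbit v l
  have hjet : f (w • (v, u)) = f (v, u) := by
    simpa only [one_smul] using polynomialJet_smul_smul_eq_of_fst_eq_zero hW (p := (v, u)) hv hw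
      hfix horder hf (fun g hg ↦ hf0 _ ⟨⟨g, hg⟩, rfl⟩) (one_mem W)
  have hwu : w • (v, u) = (v, w u) := Prod.ext hfix rfl
  rw [map_sub, ← hfl, ← hfl, ← hwu, hjet, sub_self]

end Freeness

section ComplexReflection

variable {V : Type*} [AddCommGroup V] [Module ℂ V] [FiniteDimensional ℂ V]

theorem isComplexReflection_iff {s : V ≃ₗ[ℂ] V} (hs : IsOfFinOrder s) :
    IsComplexReflection s ↔ s ∈ LinearEquiv.dilatransvections ℂ V ∧ s ≠ 1 := by
  have hquot := Submodule.finrank_quotient_add_finrank s.fixedSubmodule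
  have hlt (hs1 : s ≠ 1) : finrank ℂ s.fixedSubmodule < finrank ℂ V :=
    Submodule.finrank_lt (LinearEquiv.fixedSubmodule_eq_top_iff.not.mpr hs1)
  rw [IsComplexReflection, LinearEquiv.mem_dilatransvections_iff_finrank_quotient,
    ← LinearMap.fixedSubmodule_eq_ker]
  constructor
  · rintro ⟨-, hs1, hfix⟩
    exact ⟨by omega, hs1⟩
  · rintro ⟨hle, hs1⟩
    have := hlt hs1
    exact ⟨hs, hs1, by omega⟩

theorem closure_inter_dilatransvections_eq {W : Subgroup (V ≃ₗ[ℂ] V)}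
    (hfin : ∀ g ∈ W, IsOfFinOrder g) :
    Subgroup.closure (W ∩ LinearEquiv.dilatransvections ℂ V) =
      Subgroup.closure {s | s ∈ W ∧ IsComplexReflection s} := by
  rw [← Subgroup.closure_sdiff_one]
  congr 1 with s
  constructor
  · rintro ⟨⟨hsW, hs⟩, hs1⟩
    exact ⟨hsW, (isComplexReflection_iff (hfin s hsW)).mpr ⟨hs, hs1⟩⟩
  · rintro ⟨hsW, hs⟩
    obtain ⟨hs, hs1⟩ := (isComplexReflection_iff (hfin s hsW)).mp hs
    exact ⟨⟨hsW, hs⟩, hs1⟩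

theorem isRegularPoint_of_forall_isComplexReflection {W : Subgroup (V ≃ₗ[ℂ] V)}
    (hfin : ∀ g ∈ W, IsOfFinOrder g) {v : V} (hv : ∀ s ∈ W, IsComplexReflection s → s v ≠ v) :
    IsRegularPoint W v := fun s hsW hs hsv ↦ by_contra fun hs1 ↦
  hv s hsW ((isComplexReflection_iff (hfin s hsW)).mpr ⟨hs, hs1⟩) hsv

end ComplexReflection

/-- If `W` is a finite complex reflection group in `GL(V)`, then the action of `W` on the
regular locus `V^reg` is free: if `v ∈ V^reg` and `w ∈ W` fixes `v`, then `w = 1`. -/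
theorem regular_locus_free {V : Type*} [AddCommGroup V] [Module ℂ V]
    [FiniteDimensional ℂ V]
    (W : Subgroup (V ≃ₗ[ℂ] V)) [Finite W]
    (hW : Subgroup.closure {s | s ∈ W ∧ IsComplexReflection s} = W)
    (v : V) (hv : ∀ s ∈ W, IsComplexReflection s → s v ≠ v)
    (w : V ≃ₗ[ℂ] V) (hw : w ∈ W) (hfix : w v = v) :
    w = 1 := by
  have hfin : ∀ g ∈ W, IsOfFinOrder g := fun g hg ↦
    W.subtype.isOfFinOrder (isOfFinOrder_of_finite (⟨g, hg⟩ : W))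
  exact regular_locus_free_general W ((closure_inter_dilatransvections_eq hfin).trans hW) v
    (isRegularPoint_of_forall_isComplexReflection hfin hv) (Finite.finite_mulAction_orbit v) w hw
    (Nat.cast_ne_zero.mpr (hfin w hw).orderOf_pos.ne') hfix
end

section
/- Let R be a complex algebra which is a domain whose set of nonzero elements is a left and right Ore set, and let D be its division ring of fractions. Let G be a finite group acting on D by ring automorphisms that map R to itself. Then the invariant ring R^G is a domain whose set of nonzero elements is a left and right Ore set, and the division ring of fractions of R^G is isomorphic to the invariant division ring D^G; concretely, every element of D^G can be written in the form a·b^{-1} with a, b ∈ R^G and b ≠ 0. -/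
/-- A set `S` of elements of a ring is a left Ore set if for all `a ∈ A`, `s ∈ S` there
are `b ∈ A`, `t ∈ S` with `t * a = b * s`. -/
def IsLeftOreSet {A : Type*} [Ring A] (S : Set A) : Prop :=
  ∀ a : A, ∀ s ∈ S, ∃ b : A, ∃ t ∈ S, t * a = b * s

/-- A set `S` of elements of a ring is a right Ore set if for all `a ∈ A`, `s ∈ S` there
are `b ∈ A`, `t ∈ S` with `a * t = s * b`. -/
def IsRightOreSet {A : Type*} [Ring A] (S : Set A) : Prop :=
  ∀ a : A, ∀ s ∈ S, ∃ b : A, ∃ t ∈ S, a * t = s * b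

/-- `D` is a division ring of fractions of `A` (via the embedding `f`): `f` is injective and
every element of `D` is a right fraction `f a * (f b)⁻¹` with `a, b ∈ A`, `b ≠ 0`. -/
structure IsDivisionRingOfFractions (A D : Type*) [Ring A] [DivisionRing D]
    (f : A →+* D) : Prop where
  injective : Function.Injective f
  exists_frac : ∀ d : D, ∃ a b : A, b ≠ 0 ∧ d = f a * (f b)⁻¹

/-- The subring `R^G` of elements of `R` whose image in `D` under `f` is `G`-invariant. -/
def invariantSubring {R D : Type*} [Ring R] [DivisionRing D] (G : Type*) [Group G]
    [MulSemiringAction G D] (f : R →+* D) : Subring R where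
  carrier := {r | ∀ g : G, g • f r = f r}
  mul_mem' := by intro a b ha hb g; rw [map_mul, smul_mul', ha g, hb g]
  one_mem' := by intro g; rw [map_one, smul_one]
  add_mem' := by intro a b ha hb g; rw [map_add, smul_add, ha g, hb g]
  zero_mem' := by intro g; rw [map_zero, smul_zero]
  neg_mem' := by intro a ha g; rw [map_neg, smul_neg, ha g]

/-!
The left `D`-span of the automorphisms `d ↦ g • d` is a finite-dimensional space of functions
`D → D`, stable under postcomposition with `G`. Cutting it down by point evaluations until it is
one-dimensional produces a nonzero `φ = ∑ c_g g` with values in `D^G`; it takes over the role of the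
trace, which may vanish in positive characteristic. Clearing the denominators of the `c_g` shows
that for every nonzero `b ∈ R` the function `φ` maps some nonzero right ideal `tR` into `bR`, and
finite-dimensionality prevents `φ` from vanishing on `tR`. Hence `bR ∩ R^G ≠ 0`, so right fractions
may be given invariant denominators. Left multiples are handled in the opposite rings.
-/

open Module

section InvariantFunctions

variable {G D X : Type*} [Monoid G] [DivisionRing D] [MulSemiringAction G D]

theorem exists_mem_ne_zero_forall_smul_eq (W : Submodule D (X → D)) [FiniteDimensional D W]
    (hW : W ≠ ⊥) (hsmul : ∀ g : G, ∀ φ ∈ W, g • φ ∈ W) :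
    ∃ φ ∈ W, φ ≠ 0 ∧ ∀ g : G, g • φ = φ := by
  induction hn : finrank D W using Nat.strong_induction_on generalizing W with
  | _ n ih =>
    obtain ⟨ψ, hψW, hψ⟩ := W.exists_mem_ne_zero_of_ne_bot hW
    obtain ⟨x, hx⟩ := Function.ne_iff.mp hψ
    let W' : Submodule D (X → D) := W ⊓ LinearMap.ker (LinearMap.proj x)
    have mem_W' {φ : X → D} : φ ∈ W' ↔ φ ∈ W ∧ φ x = 0 := Iff.rfl
    have hlt : W' < W := lt_of_le_of_ne inf_le_left fun h => hx (mem_W'.mp (h ▸ hψW)).2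
    have hsmul' (g : G) (φ : X → D) (hφ : φ ∈ W') : g • φ ∈ W' :=
      mem_W'.mpr ⟨hsmul g φ (mem_W'.mp hφ).1, by
        rw [Pi.smul_apply, (mem_W'.mp hφ).2, smul_zero]⟩
    have : FiniteDimensional D W' := Submodule.finiteDimensional_inf_left _ _
    by_cases hbot : W' = ⊥
    · let φ : X → D := (ψ x)⁻¹ • ψ
      have hφW : φ ∈ W := W.smul_mem _ hψW
      have hφx : φ x = 1 := inv_mul_cancel₀ hx
      refine ⟨φ, hφW, fun h => one_ne_zero (hφx.symm.trans (congrFun h x)), fun g => ?_⟩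
      have hmem : g • φ - φ ∈ W' :=
        mem_W'.mpr ⟨W.sub_mem (hsmul g φ hφW) hφW, by
          rw [Pi.sub_apply, Pi.smul_apply, hφx, smul_one, sub_self]⟩
      rwa [hbot, Submodule.mem_bot, sub_eq_zero] at hmem
    · obtain ⟨φ, hφ, hφ_inv⟩ :=
        ih _ (hn ▸ Submodule.finrank_lt_finrank_of_lt hlt) W' hbot hsmul' rfl
      exact ⟨φ, (mem_W'.mp hφ).1, hφ_inv⟩

end InvariantFunctions

section SmulSpan

variable (G D : Type*) [Monoid G] [DivisionRing D] [MulSemiringAction G D]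

/-- The left `D`-linear span of the functions `d ↦ g • d` on `D`, that is, the image of the skew
group ring `D ∗ G` in the additive endomorphisms of `D`. Its elements are encoded as plain
functions, on which `D` acts by left multiplication of values. -/
def smulSpan : Submodule D (D → D) :=
  Submodule.span D (Set.range fun (g : G) (d : D) => g • d)

instance smulSpan.finiteDimensional [Finite G] : FiniteDimensional D (smulSpan G D) :=
  FiniteDimensional.span_of_finite D (Set.finite_range _)

variable {G D}

theorem smulSpan_ne_bot : smulSpan G D ≠ ⊥ := by
  have hmem : (fun d : D => (1 : G) • d) ∈ smulSpan G D := Submodule.subset_span ⟨1, rfl⟩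
  intro hbot
  rw [hbot, Submodule.mem_bot] at hmem
  exact one_ne_zero ((one_smul G (1 : D)).symm.trans (congrFun hmem 1))

theorem smul_mem_smulSpan (g : G) {φ : D → D} (hφ : φ ∈ smulSpan G D) :
    g • φ ∈ smulSpan G D := by
  induction hφ using Submodule.span_induction with
  | mem _ h =>
    obtain ⟨k, rfl⟩ := h
    exact Submodule.subset_span ⟨g * k, funext fun d => mul_smul g k d⟩
  | zero => simpa only [smul_zero] using Submodule.zero_mem _
  | add φ ψ _ _ hφ hψ => simpa only [smul_add] using Submodule.add_mem _ hφ hψ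
  | smul c φ _ hφ =>
    have hsemilinear : g • c • φ = (g • c) • g • φ := funext fun d => smul_mul' g c (φ d)
    exact hsemilinear ▸ Submodule.smul_mem _ _ hφ

theorem comp_mul_left_mem_smulSpan (c : D) {φ : D → D} (hφ : φ ∈ smulSpan G D) :
    (fun d => φ (c * d)) ∈ smulSpan G D := by
  suffices h : smulSpan G D ≤ (smulSpan G D).comap (LinearMap.funLeft D D (c * ·)) from h hφ
  refine Submodule.span_le.mpr ?_
  rintro _ ⟨g, rfl⟩
  have hmul : LinearMap.funLeft D D (c * ·) (fun d => g • d) = (g • c) • fun d => g • d :=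
    funext fun d => smul_mul' g c d
  change LinearMap.funLeft D D (c * ·) (fun d => g • d) ∈ smulSpan G D
  exact hmul ▸ Submodule.smul_mem _ _ (Submodule.subset_span ⟨g, rfl⟩)

end SmulSpan

namespace IsDivisionRingOfFractions

variable {R D : Type*} [Ring R] [DivisionRing D] {f : R →+* D}

theorem isDomain (hf : IsDivisionRingOfFractions R D f) : IsDomain R :=
  hf.injective.isDomain f

theorem map_ne_zero (hf : IsDivisionRingOfFractions R D f) {r : R} (hr : r ≠ 0) : f r ≠ 0 :=
  (map_ne_zero_iff f hf.injective).mpr hr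

theorem isRightOreSet (hf : IsDivisionRingOfFractions R D f) :
    IsRightOreSet {a : R | a ≠ 0} := by
  intro a s hs
  obtain ⟨b, t, ht, hfrac⟩ := hf.exists_frac ((f s)⁻¹ * f a)
  refine ⟨b, t, ht, hf.injective ?_⟩
  rw [eq_mul_inv_iff_mul_eq₀ (hf.map_ne_zero ht), mul_assoc,
    inv_mul_eq_iff_eq_mul₀ (hf.map_ne_zero hs)] at hfrac
  rw [map_mul, map_mul, hfrac]

theorem op (hf : IsDivisionRingOfFractions R D f) (hl : IsLeftOreSet {a : R | a ≠ 0}) :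
    IsDivisionRingOfFractions Rᵐᵒᵖ Dᵐᵒᵖ (RingHom.op f) where
  injective := MulOpposite.op_injective.comp (hf.injective.comp MulOpposite.unop_injective)
  exists_frac d := by
    obtain ⟨a, b, hb, hd⟩ := hf.exists_frac d.unop
    obtain ⟨c, t, ht, htc⟩ := hl a b hb
    refine ⟨.op c, .op t, (MulOpposite.op_ne_zero_iff t).mpr ht, MulOpposite.unop_injective ?_⟩
    change d.unop = (f t)⁻¹ * f c
    rw [hd, eq_inv_mul_iff_mul_eq₀ (hf.map_ne_zero ht), ← mul_assoc, ← map_mul, htc, map_mul,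
      mul_inv_cancel_right₀ (hf.map_ne_zero hb)]

theorem eq_zero_of_forall_map_eq_zero (hf : IsDivisionRingOfFractions R D f)
    {K M : Type*} [DivisionRing K] [AddCommGroup M] [Module K M]
    (W : Submodule K (D → M)) [FiniteDimensional K W]
    (hW : ∀ a : R, ∀ φ ∈ W, (fun d => φ (f a * d)) ∈ W)
    {φ : D → M} (hφW : φ ∈ W) (hφ : ∀ r, φ (f r) = 0) : φ = 0 := by
  let N : Submodule K (D → M) := W ⊓ LinearMap.ker (LinearMap.funLeft K M f)
  have mem_N {ψ : D → M} : ψ ∈ N ↔ ψ ∈ W ∧ ∀ r, ψ (f r) = 0 := by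
    simp only [N, Submodule.mem_inf, LinearMap.mem_ker, funext_iff, LinearMap.funLeft_apply,
      Pi.zero_apply]
  have : FiniteDimensional K N := Submodule.finiteDimensional_inf_left _ _
  have hN (a : R) : ∀ ψ ∈ N, LinearMap.funLeft K M (f a * ·) ψ ∈ N := fun ψ hψ =>
    mem_N.mpr ⟨hW a ψ (mem_N.mp hψ).1, fun r => by
      rw [LinearMap.funLeft_apply, ← map_mul, (mem_N.mp hψ).2]⟩
  funext d
  obtain ⟨a, b, hb, rfl⟩ := hf.exists_frac d
  -- Precomposition with `f b * ·` is injective on the finite-dimensional `N`, hence onto, so `N` is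
  -- also stable under precomposition with `(f b)⁻¹ * ·`.
  have hinj : Function.Injective (LinearMap.funLeft K M (f b * ·)) :=
    LinearMap.funLeft_injective_of_surjective K M _ (mul_left_surjective₀ (hf.map_ne_zero hb))
  obtain ⟨ψ, hψN, hψ⟩ := (LinearMap.injOn_iff_surjOn (hN b)).mp hinj.injOn
    (hN a φ (mem_N.mpr ⟨hφW, hφ⟩))
  calc φ (f a * (f b)⁻¹)
      = ψ (f b * (f b)⁻¹) := (congrFun hψ _).symm
    _ = ψ (f 1) := by rw [mul_inv_cancel₀ (hf.map_ne_zero hb), map_one]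
    _ = 0 := (mem_N.mp hψN).2 1

theorem exists_map_mul_ne_zero_of_mem_smulSpan {G : Type*} [Monoid G] [Finite G]
    [MulSemiringAction G D] (hf : IsDivisionRingOfFractions R D f)
    {φ : D → D} (hφ : φ ∈ smulSpan G D) (hφ0 : φ ≠ 0) {t : R} (ht : t ≠ 0) :
    ∃ r, φ (f (t * r)) ≠ 0 := by
  by_contra! hvanish
  have hcomp : (fun d => φ (f t * d)) = 0 :=
    hf.eq_zero_of_forall_map_eq_zero (smulSpan G D)
      (fun a _ => comp_mul_left_mem_smulSpan (f a)) (comp_mul_left_mem_smulSpan (f t) hφ)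
      fun r => by rw [← map_mul, hvanish]
  refine hφ0 (funext fun d => ?_)
  simpa only [mul_inv_cancel_left₀ (hf.map_ne_zero ht), Pi.zero_apply] using
    congrFun hcomp ((f t)⁻¹ * d)

section GroupAction

variable {G : Type*} [Group G] [MulSemiringAction G D]

theorem exists_map_mul_eq_map_mul_of_mem_smulSpan (hf : IsDivisionRingOfFractions R D f)
    (hstab : ∀ (g : G) (r : R), ∃ r' : R, g • f r = f r') {φ : D → D} (hφ : φ ∈ smulSpan G D)
    {b : R} (hb : b ≠ 0) : ∃ t : R, t ≠ 0 ∧ ∀ r, ∃ s, φ (f (t * r)) = f (b * s) := by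
  induction hφ using Submodule.span_induction generalizing b with
  | mem _ h =>
    obtain ⟨g, rfl⟩ := h
    obtain ⟨t, ht⟩ := hstab g⁻¹ b
    have hgt : g • f t = f b := by rw [← ht, smul_inv_smul]
    refine ⟨t, ?_, fun r => ?_⟩
    · rintro rfl
      exact hf.map_ne_zero hb (by rw [← hgt, map_zero, smul_zero])
    · obtain ⟨s, hs⟩ := hstab g r
      refine ⟨s, ?_⟩
      calc g • f (t * r) = g • f t * g • f r := by rw [map_mul, smul_mul']
        _ = f (b * s) := by rw [hgt, hs, map_mul]
  | zero => exact ⟨b, hb, fun _ => ⟨0, by rw [mul_zero, map_zero, Pi.zero_apply]⟩⟩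
  | add φ ψ _ _ hφ hψ =>
    have := hf.isDomain
    obtain ⟨t, ht, hφt⟩ := hφ hb
    obtain ⟨u, hu, hψu⟩ := hψ hb
    obtain ⟨v, w, hw, htw⟩ := hf.isRightOreSet t u hu
    refine ⟨t * w, mul_ne_zero ht hw, fun r => ?_⟩
    obtain ⟨s, hs⟩ := hφt (w * r)
    obtain ⟨s', hs'⟩ := hψu (v * r)
    refine ⟨s + s', ?_⟩
    rw [Pi.add_apply, mul_add, map_add, ← hs, ← hs', ← mul_assoc, ← mul_assoc, htw]
  | smul c φ _ hφ =>
    obtain ⟨a, e, he, hfrac⟩ := hf.exists_frac ((f b)⁻¹ * c)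
    obtain ⟨t, ht, hφt⟩ := hφ he
    refine ⟨t, ht, fun r => ?_⟩
    obtain ⟨s, hs⟩ := hφt r
    rw [inv_mul_eq_iff_eq_mul₀ (hf.map_ne_zero hb)] at hfrac
    refine ⟨a * s, ?_⟩
    calc c * φ (f (t * r)) = f b * (f a * (f e)⁻¹) * (f e * f s) := by rw [hs, hfrac, map_mul]
      _ = f b * (f a * f s) := by
        rw [mul_assoc, mul_assoc, inv_mul_cancel_left₀ (hf.map_ne_zero he)]
      _ = f (b * (a * s)) := by rw [map_mul, map_mul]

theorem exists_mul_right_mem_invariantSubring [Finite G] (hf : IsDivisionRingOfFractions R D f)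
    (hstab : ∀ (g : G) (r : R), ∃ r' : R, g • f r = f r') {b : R} (hb : b ≠ 0) :
    ∃ r, b * r ∈ invariantSubring G f ∧ b * r ≠ 0 := by
  obtain ⟨φ, hφ, hφ0, hφG⟩ := exists_mem_ne_zero_forall_smul_eq (G := G) (smulSpan G D)
    smulSpan_ne_bot fun g _ => smul_mem_smulSpan g
  obtain ⟨t, ht, htb⟩ := hf.exists_map_mul_eq_map_mul_of_mem_smulSpan hstab hφ hb
  obtain ⟨r, hr⟩ := hf.exists_map_mul_ne_zero_of_mem_smulSpan hφ hφ0 ht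
  obtain ⟨s, hs⟩ := htb r
  rw [hs] at hr
  exact ⟨s, fun g => hs ▸ congrFun (hφG g) _, fun h => hr (by rw [h, map_zero])⟩

theorem exists_mul_left_mem_invariantSubring [Finite G] (hf : IsDivisionRingOfFractions R D f)
    (hl : IsLeftOreSet {a : R | a ≠ 0})
    (hstab : ∀ (g : G) (r : R), ∃ r' : R, g • f r = f r') {b : R} (hb : b ≠ 0) :
    ∃ r, r * b ∈ invariantSubring G f ∧ r * b ≠ 0 := by
  let _ : MulSemiringAction G Dᵐᵒᵖ :=
    { (inferInstance : DistribMulAction G Dᵐᵒᵖ),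
      (inferInstance : MulDistribMulAction G Dᵐᵒᵖ) with }
  have hstab_op (g : G) (r : Rᵐᵒᵖ) : ∃ r' : Rᵐᵒᵖ, g • RingHom.op f r = RingHom.op f r' := by
    obtain ⟨r', hr'⟩ := hstab g r.unop
    exact ⟨.op r', congrArg MulOpposite.op hr'⟩
  obtain ⟨r, hr, hr0⟩ := (hf.op hl).exists_mul_right_mem_invariantSubring hstab_op
    ((MulOpposite.op_ne_zero_iff b).mpr hb)
  exact ⟨r.unop, fun g => congrArg MulOpposite.unop (hr g),
    fun h => hr0 (MulOpposite.unop_injective h)⟩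

end GroupAction

end IsDivisionRingOfFractions

section InvariantSubring

variable {R D G : Type*} [Ring R] [DivisionRing D] [Group G] [MulSemiringAction G D]
  {f : R →+* D}

theorem mem_invariantSubring_of_mul_mem_left {s b : R} (hs : s ∈ invariantSubring G f)
    (hs0 : f s ≠ 0) (hsb : s * b ∈ invariantSubring G f) : b ∈ invariantSubring G f := fun g =>
  mul_left_cancel₀ hs0 <| calc
    f s * g • f b = g • f (s * b) := by rw [map_mul, smul_mul', hs g]
    _ = f s * f b := by rw [hsb g, map_mul]

theorem mem_invariantSubring_of_mul_mem_right {s b : R} (hs : s ∈ invariantSubring G f)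
    (hs0 : f s ≠ 0) (hbs : b * s ∈ invariantSubring G f) : b ∈ invariantSubring G f := fun g =>
  mul_right_cancel₀ hs0 <| calc
    g • f b * f s = g • f (b * s) := by rw [map_mul, smul_mul', hs g]
    _ = f b * f s := by rw [hbs g, map_mul]

variable [Finite G]

theorem isLeftOreSet_invariantSubring (hf : IsDivisionRingOfFractions R D f)
    (hl : IsLeftOreSet {a : R | a ≠ 0})
    (hstab : ∀ (g : G) (r : R), ∃ r' : R, g • f r = f r') :
    IsLeftOreSet {a : invariantSubring G f | a ≠ 0} := by
  rintro ⟨a, ha⟩ ⟨s, hs⟩ hs0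
  have hs0 : s ≠ 0 := Subtype.coe_ne_coe.mpr hs0
  obtain ⟨b, t, ht, htb⟩ := hl a s hs0
  obtain ⟨r, hrt, hrt0⟩ := hf.exists_mul_left_mem_invariantSubring hl hstab ht
  have hmul : r * t * a = r * b * s := by rw [mul_assoc, htb, mul_assoc]
  have hrb : r * b ∈ invariantSubring G f :=
    mem_invariantSubring_of_mul_mem_right hs (hf.map_ne_zero hs0) (hmul ▸ mul_mem hrt ha)
  exact ⟨⟨r * b, hrb⟩, ⟨r * t, hrt⟩, Subtype.coe_ne_coe.mp hrt0, Subtype.ext hmul⟩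

theorem isRightOreSet_invariantSubring (hf : IsDivisionRingOfFractions R D f)
    (hstab : ∀ (g : G) (r : R), ∃ r' : R, g • f r = f r') :
    IsRightOreSet {a : invariantSubring G f | a ≠ 0} := by
  rintro ⟨a, ha⟩ ⟨s, hs⟩ hs0
  have hs0 : s ≠ 0 := Subtype.coe_ne_coe.mpr hs0
  obtain ⟨b, t, ht, htb⟩ := hf.isRightOreSet a s hs0
  obtain ⟨r, htr, htr0⟩ := hf.exists_mul_right_mem_invariantSubring hstab ht
  have hmul : a * (t * r) = s * (b * r) := by rw [← mul_assoc, htb, mul_assoc]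
  have hbr : b * r ∈ invariantSubring G f :=
    mem_invariantSubring_of_mul_mem_left hs (hf.map_ne_zero hs0) (hmul ▸ mul_mem ha htr)
  exact ⟨⟨b * r, hbr⟩, ⟨t * r, htr⟩, Subtype.coe_ne_coe.mp htr0, Subtype.ext hmul⟩

theorem exists_frac_invariantSubring (hf : IsDivisionRingOfFractions R D f)
    (hstab : ∀ (g : G) (r : R), ∃ r' : R, g • f r = f r') {d : D} (hd : ∀ g : G, g • d = d) :
    ∃ a b : invariantSubring G f, b ≠ 0 ∧ d = f (a : R) * (f (b : R))⁻¹ := by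
  obtain ⟨a, b, hb, hfrac⟩ := hf.exists_frac d
  obtain ⟨r, hbr, hbr0⟩ := hf.exists_mul_right_mem_invariantSubring hstab hb
  rw [eq_mul_inv_iff_mul_eq₀ (hf.map_ne_zero hb)] at hfrac
  have hmul : d * f (b * r) = f (a * r) := by rw [map_mul, ← mul_assoc, hfrac, map_mul]
  have har : a * r ∈ invariantSubring G f := fun g => by
    rw [← hmul, smul_mul', hd g, hbr g]
  exact ⟨⟨a * r, har⟩, ⟨b * r, hbr⟩, Subtype.coe_ne_coe.mp hbr0,
    (eq_mul_inv_iff_mul_eq₀ (hf.map_ne_zero hbr0)).mpr hmul⟩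

end InvariantSubring

theorem invariants_fraction_ring_general {R D : Type*} [Ring R] [DivisionRing D]
    (G : Type*) [Group G] [Finite G] [MulSemiringAction G D]
    (f : R →+* D) (hf : IsDivisionRingOfFractions R D f)
    (hl : IsLeftOreSet {a : R | a ≠ 0})
    (hstab : ∀ (g : G) (r : R), ∃ r' : R, g • f r = f r') :
    IsDomain (invariantSubring G f) ∧
    IsLeftOreSet {a : invariantSubring G f | a ≠ 0} ∧
    IsRightOreSet {a : invariantSubring G f | a ≠ 0} ∧
    ∀ d : D, (∀ g : G, g • d = d) →
      ∃ a b : invariantSubring G f, b ≠ 0 ∧ d = f (a : R) * (f (b : R))⁻¹ := by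
  have := hf.isDomain
  exact ⟨inferInstance, isLeftOreSet_invariantSubring hf hl hstab,
    isRightOreSet_invariantSubring hf hstab, fun _ => exists_frac_invariantSubring hf hstab⟩

/-- Let `R` be a complex Ore domain with division ring of fractions `D`, and let a finite
group `G` act on `D` by ring automorphisms mapping `R` to itself.  Then `R^G` is an Ore
domain and the division ring of fractions of `R^G` is `D^G`: every `G`-invariant element
of `D` is a right fraction `(f a) * (f b)⁻¹` with `a, b ∈ R^G`, `b ≠ 0`. -/
theorem invariants_fraction_ring {R D : Type*} [Ring R] [IsDomain R] [Algebra ℂ R]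
    [DivisionRing D]
    (G : Type*) [Group G] [Finite G] [MulSemiringAction G D]
    (f : R →+* D) (hf : IsDivisionRingOfFractions R D f)
    (hl : IsLeftOreSet {a : R | a ≠ 0}) (hr : IsRightOreSet {a : R | a ≠ 0})
    (hstab : ∀ (g : G) (r : R), ∃ r' : R, g • f r = f r') :
    IsDomain (invariantSubring G f) ∧
    IsLeftOreSet {a : invariantSubring G f | a ≠ 0} ∧
    IsRightOreSet {a : invariantSubring G f | a ≠ 0} ∧
    ∀ d : D, (∀ g : G, g • d = d) →
      ∃ a b : invariantSubring G f, b ≠ 0 ∧ d = f (a : R) * (f (b : R))⁻¹ := by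
  exact invariants_fraction_ring_general G f hf hl hstab
end

section
/- Let U be a domain and S ⊆ U \ {0} a multiplicative submonoid whose elements pairwise commute with each other, and which is a left and right Ore set in U. If the Ore localization U[S^{-1}] is a domain whose set of nonzero elements is a left and right Ore set, then the set of nonzero elements of U is itself a left and right Ore set, i.e. U is an Ore domain. -/
/-- `B` is an Ore localization of `A` at the submonoid `M` (via the embedding `g`):
`g` is injective, the elements of `M` become units, and every element of `B` is a
right fraction `g a * (g m)⁻¹`, expressed as `b * g m = g a`. -/
structure IsOreLocalizationOf (A B : Type*) [Ring A] [Ring B] (M : Submonoid A)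
    (g : A →+* B) : Prop where
  injective : Function.Injective g
  isUnit : ∀ m ∈ M, IsUnit (g m)
  exists_frac : ∀ b : B, ∃ a : A, ∃ m ∈ M, b * g m = g a

/-!
An Ore relation `t * g u = v * g s` between images of elements of `U` can be multiplied on the left
by the image of a common denominator of `t` and `v`, after which it is the image of an Ore relation
in `U`; the multiplier stays nonzero because denominators are units. The right-hand case is
symmetric. Left fractions come from right fractions by the left Ore condition on the denominators.
-/

namespace IsOreLocalizationOf

variable {A B : Type*} [Ring A] [Ring B] {M : Submonoid A} {g : A →+* B}

theorem exists_left_frac (hg : IsOreLocalizationOf A B M g) (hM : IsLeftOreSet (M : Set A))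
    (b : B) : ∃ a : A, ∃ m ∈ M, g m * b = g a := by
  obtain ⟨a, m, hm, hbm⟩ := hg.exists_frac b
  obtain ⟨c, n, hn, hna⟩ := hM a m hm
  refine ⟨c, n, hn, (hg.isUnit m hm).mul_right_cancel ?_⟩
  rw [mul_assoc, hbm, ← map_mul, hna, map_mul]

theorem exists_common_right_denominator (hg : IsOreLocalizationOf A B M g) (b c : B) :
    ∃ m ∈ M, ∃ x y : A, b * g m = g x ∧ c * g m = g y := by
  obtain ⟨x, m, hm, hx⟩ := hg.exists_frac b
  obtain ⟨y, n, hn, hy⟩ := hg.exists_frac (c * g m)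
  refine ⟨m * n, mul_mem hm hn, x * n, y, ?_, ?_⟩
  · rw [map_mul, ← mul_assoc, hx, map_mul]
  · rw [map_mul, ← mul_assoc, hy]

theorem exists_common_left_denominator (hg : IsOreLocalizationOf A B M g)
    (hM : IsLeftOreSet (M : Set A)) (b c : B) :
    ∃ m ∈ M, ∃ x y : A, g m * b = g x ∧ g m * c = g y := by
  obtain ⟨x, m, hm, hx⟩ := hg.exists_left_frac hM b
  obtain ⟨y, n, hn, hy⟩ := hg.exists_left_frac hM (g m * c)
  refine ⟨n * m, mul_mem hn hm, n * x, y, ?_, ?_⟩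
  · rw [map_mul, mul_assoc, hx, map_mul]
  · rw [map_mul, mul_assoc, hy]

theorem isLeftOreSet_preimage (hg : IsOreLocalizationOf A B M g) (hM : IsLeftOreSet (M : Set A))
    {T : Set B} (hT : IsLeftOreSet T) (hMT : ∀ m ∈ M, ∀ t ∈ T, g m * t ∈ T) :
    IsLeftOreSet (g ⁻¹' T) := by
  intro a s hs
  obtain ⟨v, t, ht, hta⟩ := hT (g a) (g s) hs
  obtain ⟨m, hm, x, y, hx, hy⟩ := hg.exists_common_left_denominator hM t v
  have hxT : g x ∈ T := hx ▸ hMT m hm t ht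
  refine ⟨y, x, hxT, hg.injective ?_⟩
  calc g (x * a) = g m * (t * g a) := by rw [map_mul, ← hx, mul_assoc]
    _ = g m * (v * g s) := by rw [hta]
    _ = g (y * s) := by rw [map_mul, ← hy, mul_assoc]

theorem isRightOreSet_preimage (hg : IsOreLocalizationOf A B M g)
    {T : Set B} (hT : IsRightOreSet T) (hTM : ∀ t ∈ T, ∀ m ∈ M, t * g m ∈ T) :
    IsRightOreSet (g ⁻¹' T) := by
  intro a s hs
  obtain ⟨v, t, ht, hat⟩ := hT (g a) (g s) hs
  obtain ⟨m, hm, x, y, hx, hy⟩ := hg.exists_common_right_denominator t v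
  have hxT : g x ∈ T := hx ▸ hTM t ht m hm
  refine ⟨y, x, hxT, hg.injective ?_⟩
  calc g (a * x) = g a * t * g m := by rw [map_mul, ← hx, mul_assoc]
    _ = g s * v * g m := by rw [hat]
    _ = g (s * y) := by rw [map_mul, ← hy, mul_assoc]

theorem preimage_setOf_ne_zero (hg : IsOreLocalizationOf A B M g) :
    g ⁻¹' {b : B | b ≠ 0} = {a : A | a ≠ 0} :=
  Set.ext fun _ => map_ne_zero_iff g hg.injective

end IsOreLocalizationOf

theorem ore_domain_of_ore_localization_general {A B : Type*} [Ring A] [Ring B]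
    {M : Submonoid A} (hM : IsLeftOreSet (M : Set A))
    {g : A →+* B} (hg : IsOreLocalizationOf A B M g)
    (hBl : IsLeftOreSet {b : B | b ≠ 0}) (hBr : IsRightOreSet {b : B | b ≠ 0}) :
    IsLeftOreSet {a : A | a ≠ 0} ∧ IsRightOreSet {a : A | a ≠ 0} := by
  rw [← hg.preimage_setOf_ne_zero]
  constructor
  · exact hg.isLeftOreSet_preimage hM hBl fun m hm _ ht =>
      (hg.isUnit m hm).mul_right_eq_zero.not.mpr ht
  · exact hg.isRightOreSet_preimage hBr fun _ ht m hm =>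
      (hg.isUnit m hm).mul_left_eq_zero.not.mpr ht

/-- Let `U` be a domain and `S ⊆ U \ {0}` a multiplicative submonoid of pairwise commuting
elements which is a left and right Ore set in `U`.  If the Ore localization `U[S⁻¹]` is a
domain whose nonzero elements form a left and right Ore set, then `U` is an Ore domain. -/
theorem ore_domain_of_ore_localization {U B : Type*} [Ring U] [IsDomain U] [Ring B]
    (M : Submonoid U) (hM : (M : Set U) ⊆ {u : U | u ≠ 0})
    (hcomm : ∀ s ∈ M, ∀ t ∈ M, s * t = t * s)
    (hMl : IsLeftOreSet (M : Set U)) (hMr : IsRightOreSet (M : Set U))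
    (g : U →+* B) (hg : IsOreLocalizationOf U B M g)
    (hB : IsDomain B)
    (hBl : IsLeftOreSet {b : B | b ≠ 0}) (hBr : IsRightOreSet {b : B | b ≠ 0}) :
    IsLeftOreSet {u : U | u ≠ 0} ∧ IsRightOreSet {u : U | u ≠ 0} :=
  ore_domain_of_ore_localization_general hMl hg hBl hBr
end

section
/- Let n ≥ 1 and let L = ℂ[x_1^{±1}, …, x_n^{±1}] be the ring of Laurent polynomials in n variables over ℂ. Let the group B_n = (ℤ/2ℤ)^n ⋊ S_n act on L by ℂ-algebra automorphisms, where S_n permutes the variables and the i-th generator of (ℤ/2ℤ)^n sends x_i to -x_i^{-1} and fixes x_j for j ≠ i. Set s_i = e_i(x_1 - x_1^{-1}, …, x_n - x_n^{-1}) for i = 1, …, n, where e_i is the i-th elementary symmetric polynomial. Then the invariant ring L^{B_n} equals the ℂ-subalgebra generated by s_1, …, s_n, and s_1, …, s_n are algebraically independent over ℂ (so L^{B_n} is a polynomial algebra in n variables). -/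
noncomputable section

/-- The Laurent polynomial ring `ℂ[x₁^{±1}, …, xₙ^{±1}]`, realized as the group algebra
of `ℤⁿ` over `ℂ`. -/
abbrev LaurentAlg (n : ℕ) := AddMonoidAlgebra ℂ (Fin n →₀ ℤ)

/-- The variable `xᵢ`. -/
def Xvar {n : ℕ} (i : Fin n) : LaurentAlg n :=
  AddMonoidAlgebra.single (Finsupp.single i 1) 1

/-- The inverse variable `xᵢ⁻¹`. -/
def Xinv {n : ℕ} (i : Fin n) : LaurentAlg n :=
  AddMonoidAlgebra.single (Finsupp.single i (-1)) 1

/-- `sᵢ = eᵢ(x₁ - x₁⁻¹, …, xₙ - xₙ⁻¹)`, the `i`-th elementary symmetric polynomial in the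
`xⱼ - xⱼ⁻¹` (here `i : Fin n` corresponds to `e_{i+1}`). -/
def sB {n : ℕ} (i : Fin n) : LaurentAlg n :=
  ∑ t ∈ Finset.powersetCard ((i : ℕ) + 1) Finset.univ,
    ∏ j ∈ t, (Xvar j - Xinv j)

/-!
Write `yᵢ = xᵢ - xᵢ⁻¹`. Since `xᵢ² = 1 + yᵢ xᵢ`, adjoining `xᵢ` to a subalgebra `B` containing `yᵢ`
gives `B + B xᵢ`. If the `i`-th sign generator fixes `B`, it moves `a + b xᵢ` by
`-b (xᵢ + xᵢ⁻¹)`, and `xᵢ + xᵢ⁻¹` is a nonzerodivisor, so its fixed points in `B + B xᵢ` are `B`.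
Removing the `xᵢ` one at a time, the invariants of `(ℤ/2ℤ)ⁿ` are the polynomials in the `yᵢ`. Those
are algebraically independent, because `xᵐ` is the only top monomial of `yᵐ`, and `Sₙ` permutes
them, so the fundamental theorem of symmetric polynomials applies.
-/

open MvPolynomial
open scoped AddMonoidAlgebra

section HasTopMonomial

variable {R M : Type*} [PartialOrder M]

/-- The exponent `m` occurs in `f` with coefficient `1` and dominates every other exponent of `f`.
The order on exponents may be partial; on `ι →₀ ℤ` it is the componentwise one. -/
def HasTopMonomial [Semiring R] (f : R[M]) (m : M) : Prop :=
  f.coeff m = 1 ∧ ∀ k ∈ f.coeff.support, k ≤ m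

namespace HasTopMonomial

theorem single [Semiring R] (m : M) :
    HasTopMonomial (AddMonoidAlgebra.single m 1 : R[M]) m := by
  refine ⟨by simp, fun k hk => ?_⟩
  exact (Finset.mem_singleton.mp (Finsupp.support_single_subset hk)).le

theorem add_of_lt [Semiring R] {f g : R[M]} {m : M} (hf : HasTopMonomial f m)
    (hg : ∀ k ∈ g.coeff.support, k < m) : HasTopMonomial (f + g) m := by
  classical
  have hgm : g.coeff m = 0 := Finsupp.notMem_support_iff.mp fun hm => (hg m hm).false
  refine ⟨by simp [hf.1, hgm], fun k hk => ?_⟩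
  rcases Finset.mem_union.mp (Finsupp.support_add hk) with hkf | hkg
  · exact hf.2 k hkf
  · exact (hg k hkg).le

variable [AddCommMonoid M] [IsOrderedCancelAddMonoid M]

theorem coeff_mul_add [Semiring R] {f g : R[M]} {k m : M} (hg : HasTopMonomial g m)
    (hk : ∀ l ∈ f.coeff.support, k ≤ l → l = k) : (f * g).coeff (k + m) = f.coeff k := by
  have hunique : UniqueAdd f.coeff.support g.coeff.support k m := by
    intro a b ha hb hab
    have hak : a = k := hk a ha <| le_of_add_le_add_right <|
      hab.symm.le.trans (by gcongr; exact hg.2 b hb)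
    exact ⟨hak, add_left_cancel (hak ▸ hab)⟩
  rw [AddMonoidAlgebra.coeff_mul_add_of_uniqueAdd hunique, hg.1, mul_one]

theorem eq_zero_of_mul_eq_zero [Semiring R] {f g : R[M]} {m : M} (hg : HasTopMonomial g m)
    (hfg : f * g = 0) : f = 0 := by
  by_contra hf
  obtain ⟨k, hk⟩ := f.coeff.support.exists_maximal (by simpa using hf)
  have hcoeff : (f * g).coeff (k + m) = f.coeff k :=
    hg.coeff_mul_add fun l hl hkl => hk.eq_of_ge hl hkl
  exact Finsupp.mem_support_iff.mp hk.prop (by simpa [hfg] using hcoeff.symm)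

theorem mul [Semiring R] {f g : R[M]} {k m : M} (hf : HasTopMonomial f k)
    (hg : HasTopMonomial g m) : HasTopMonomial (f * g) (k + m) := by
  classical
  refine ⟨(hg.coeff_mul_add fun l hl hkl => (hf.2 l hl).antisymm hkl).trans hf.1, fun l hl => ?_⟩
  obtain ⟨a, ha, b, hb, rfl⟩ :=
    Finset.mem_add.mp (AddMonoidAlgebra.support_coeff_mul_subset f g hl)
  exact add_le_add (hf.2 a ha) (hg.2 b hb)

theorem pow [Semiring R] {f : R[M]} {m : M} (hf : HasTopMonomial f m) (e : ℕ) :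
    HasTopMonomial (f ^ e) (e • m) := by
  induction e with
  | zero => simpa [AddMonoidAlgebra.one_def] using single (R := R) (0 : M)
  | succ e ih => simpa only [pow_succ, succ_nsmul] using ih.mul hf

theorem prod [CommSemiring R] {ι : Type*} {s : Finset ι} {f : ι → R[M]} {m : ι → M}
    (hf : ∀ i ∈ s, HasTopMonomial (f i) (m i)) :
    HasTopMonomial (∏ i ∈ s, f i) (∑ i ∈ s, m i) := by
  classical
  induction s using Finset.induction_on with
  | empty => simpa [AddMonoidAlgebra.one_def] using single (R := R) (0 : M)
  | insert i s hi ih =>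
    rw [Finset.prod_insert hi, Finset.sum_insert hi]
    exact (hf i (s.mem_insert_self i)).mul (ih fun j hj => hf j (Finset.mem_insert_of_mem hj))

theorem algebraicIndependent [CommRing R] {ι : Type*} {y : ι → R[M]} {d : ι → M}
    (hy : ∀ i, HasTopMonomial (y i) (d i)) (hd : LinearIndependent ℕ d) :
    AlgebraicIndependent R y := by
  rw [algebraicIndependent_iff]
  intro p hp
  by_contra hp0
  let deg : (ι →₀ ℕ) → M := Finsupp.linearCombination ℕ d
  have htop (l : ι →₀ ℕ) : HasTopMonomial (l.prod fun i e => y i ^ e) (deg l) :=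
    prod fun i _ => (hy i).pow (l i)
  obtain ⟨k, hk⟩ := p.support.exists_maximalFor deg (by simpa using hp0)
  have hne (l) (hl : l ∈ p.support) (hlk : l ≠ k) :
      (l.prod fun i e => y i ^ e).coeff (deg k) = 0 := by
    by_contra hcoeff
    have hkl : deg k ≤ deg l := (htop l).2 _ (Finsupp.mem_support_iff.mpr hcoeff)
    exact hlk (hd ((hk.2 hl hkl).antisymm hkl))
  have hexpand : (aeval y p).coeff (deg k) =
      ∑ l ∈ p.support, p.coeff l * (l.prod fun i e => y i ^ e).coeff (deg k) := by
    simp only [aeval_def, eval₂_eq, ← Algebra.smul_def, AddMonoidAlgebra.coeff_sum,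
      Finsupp.finsetSum_apply, AddMonoidAlgebra.coeff_smul_apply, smul_eq_mul, Finsupp.prod]
  have hcoeff : (aeval y p).coeff (deg k) = p.coeff k := by
    rw [hexpand, Finset.sum_eq_single_of_mem k hk.1, (htop k).1, mul_one]
    exact fun l hl hlk => by rw [hne l hl hlk, mul_zero]
  exact mem_support_iff.mp hk.1 (by simpa [hp] using hcoeff.symm)

end HasTopMonomial

end HasTopMonomial

section QuadraticExtension

variable {R A : Type*} [CommRing R] [CommRing A] [Algebra R A] {B : Subalgebra R A} {x : A}

theorem exists_eq_add_mul_of_mem_adjoin_insert {c d : A} (hc : c ∈ B) (hd : d ∈ B)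
    (hx : x ^ 2 = c + d * x) {f : A} (hf : f ∈ Algebra.adjoin R (insert x (B : Set A))) :
    ∃ a ∈ B, ∃ b ∈ B, f = a + b * x := by
  induction hf using Algebra.adjoin_induction with
  | mem f hf =>
    rcases hf with rfl | hf
    · exact ⟨0, zero_mem B, 1, one_mem B, by ring⟩
    · exact ⟨f, hf, 0, zero_mem B, by ring⟩
  | algebraMap r => exact ⟨algebraMap R A r, B.algebraMap_mem r, 0, zero_mem B, by ring⟩
  | add f g _ _ hf hg =>
    obtain ⟨a, ha, b, hb, rfl⟩ := hf
    obtain ⟨a', ha', b', hb', rfl⟩ := hg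
    exact ⟨a + a', add_mem ha ha', b + b', add_mem hb hb', by ring⟩
  | mul f g _ _ hf hg =>
    obtain ⟨a, ha, b, hb, rfl⟩ := hf
    obtain ⟨a', ha', b', hb', rfl⟩ := hg
    exact ⟨a * a' + b * b' * c, by aesop, a * b' + b * a' + b * b' * d, by aesop,
      by linear_combination b * b' * hx⟩

theorem mem_of_mem_adjoin_insert_of_fixed {c d : A} (hc : c ∈ B) (hd : d ∈ B)
    (hx : x ^ 2 = c + d * x) {T : A →ₐ[R] A} (hTB : ∀ b ∈ B, T b = b)
    (hTx : ∀ b, b * (T x - x) = 0 → b = 0) {f : A}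
    (hf : f ∈ Algebra.adjoin R (insert x (B : Set A))) (hTf : T f = f) : f ∈ B := by
  obtain ⟨a, ha, b, hb, rfl⟩ := exists_eq_add_mul_of_mem_adjoin_insert hc hd hx hf
  rw [map_add, map_mul, hTB a ha, hTB b hb] at hTf
  have hb0 : b = 0 := hTx b (by linear_combination hTf)
  simpa [hb0] using ha

end QuadraticExtension

section SymmetricPolynomials

variable {R ι A : Type*} [CommRing R] [CommRing A] [Algebra R A] {y : ι → A}

theorem mem_map_symmetricSubalgebra_iff_fixed (hy : AlgebraicIndependent R y)
    {P : Equiv.Perm ι → A →ₐ[R] A} (hP : ∀ σ i, P σ (y i) = y (σ i)) {f : A} :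
    f ∈ (symmetricSubalgebra ι R).map (aeval y) ↔
      f ∈ Algebra.adjoin R (Set.range y) ∧ ∀ σ, P σ f = f := by
  have hrename (σ : Equiv.Perm ι) (p : MvPolynomial ι R) :
      P σ (aeval y p) = aeval y (rename σ p) := by
    rw [aeval_rename, comp_aeval_apply]
    simp only [hP]
    rfl
  rw [Algebra.adjoin_range_eq_range_aeval]
  constructor
  · rintro ⟨p, hp, rfl⟩
    exact ⟨⟨p, rfl⟩, fun σ => (hrename σ p).trans (congrArg _ (hp σ))⟩
  · rintro ⟨⟨p, rfl⟩, hfix⟩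
    exact ⟨p, fun σ => hy ((hrename σ p).symm.trans (hfix σ)), rfl⟩

variable [Fintype ι] {n : ℕ}

theorem algebraicIndependent_aeval_esymm (hy : AlgebraicIndependent R y)
    (hn : n ≤ Fintype.card ι) :
    AlgebraicIndependent R fun i : Fin n => aeval y (esymm ι R (i + 1)) := by
  have hesymm : AlgebraicIndependent R fun i : Fin n => esymm ι R (i + 1) := by
    intro p q hpq
    rw [← esymmAlgHom_apply, ← esymmAlgHom_apply] at hpq
    exact esymmAlgHom_injective R hn (Subtype.ext hpq)
  exact hesymm.map' hy

theorem adjoin_range_aeval_esymm (y : ι → A) (hn : Fintype.card ι ≤ n) :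
    Algebra.adjoin R (Set.range fun i : Fin n => aeval y (esymm ι R (i + 1))) =
      (symmetricSubalgebra ι R).map (aeval y) := by
  have hesymm : Algebra.adjoin R (Set.range fun i : Fin n => esymm ι R (i + 1)) =
      symmetricSubalgebra ι R := by
    ext p
    rw [Algebra.adjoin_range_eq_range_aeval]
    constructor
    · rintro ⟨q, rfl⟩
      exact esymmAlgHom_apply (σ := ι) q ▸ (esymmAlgHom ι R n q).2
    · intro hp
      obtain ⟨q, hq⟩ := esymmAlgHom_surjective R hn ⟨p, hp⟩
      exact ⟨q, (esymmAlgHom_apply q).symm.trans (congrArg Subtype.val hq)⟩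
  rw [← hesymm, AlgHom.map_adjoin, ← Set.range_comp]
  rfl

end SymmetricPolynomials

section Laurent

variable (R : Type*) [CommRing R] {ι : Type*}

/-- The variable `xᵢ` of the Laurent polynomial ring `R[ι →₀ ℤ]`. -/
def laurentX (i : ι) : R[ι →₀ ℤ] := AddMonoidAlgebra.single (Finsupp.single i 1) 1

/-- The inverse `xᵢ⁻¹` of the variable `xᵢ`. -/
def laurentXInv (i : ι) : R[ι →₀ ℤ] := AddMonoidAlgebra.single (Finsupp.single i (-1)) 1

/-- The element `yᵢ = xᵢ - xᵢ⁻¹`, which is invariant under `xᵢ ↦ -xᵢ⁻¹`. -/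
def laurentY (i : ι) : R[ι →₀ ℤ] := laurentX R i - laurentXInv R i

variable {R}

theorem laurentX_mul_laurentXInv (i : ι) : laurentX R i * laurentXInv R i = 1 := by
  simp [laurentX, laurentXInv, AddMonoidAlgebra.single_mul_single,
    AddMonoidAlgebra.one_def]

theorem laurentX_sq (i : ι) : laurentX R i ^ 2 = 1 + laurentY R i * laurentX R i := by
  rw [laurentY]
  linear_combination laurentX_mul_laurentXInv (R := R) i

theorem hasTopMonomial_laurentX_add_smul_laurentXInv (c : R) (i : ι) :
    HasTopMonomial (laurentX R i + c • laurentXInv R i) (Finsupp.single i 1) := by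
  refine (HasTopMonomial.single _).add_of_lt fun k hk => ?_
  have hk' : k = Finsupp.single i (-1) := Finset.mem_singleton.mp <|
    Finsupp.support_single_subset (Finsupp.support_smul hk)
  exact hk' ▸ (Finsupp.single_mono (by norm_num)).lt_of_ne fun h => by
    simpa using DFunLike.congr_fun h i

theorem algebraicIndependent_laurentY : AlgebraicIndependent R (laurentY R (ι := ι)) := by
  refine HasTopMonomial.algebraicIndependent (d := fun i => Finsupp.single i (1 : ℤ))
    (fun i => ?_) ?_
  · simpa [laurentY, sub_eq_add_neg] using hasTopMonomial_laurentX_add_smul_laurentXInv (-1 : R) i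
  · exact (Finsupp.linearIndependent_single_one ℤ ι).restrict_scalars' ℕ

theorem single_mem_adjoin_laurentY_laurentX (k : ι →₀ ℤ) :
    (AddMonoidAlgebra.single k 1 : R[ι →₀ ℤ]) ∈
      Algebra.adjoin R (Set.range (laurentY R) ∪ Set.range (laurentX R)) := by
  set L := Algebra.adjoin R (Set.range (laurentY R (ι := ι)) ∪ Set.range (laurentX R))
  have hX (i : ι) : laurentX R i ∈ L := Algebra.subset_adjoin (Or.inr ⟨i, rfl⟩)
  have hXInv (i : ι) : laurentXInv R i ∈ L := by
    have hY : laurentY R i ∈ L := Algebra.subset_adjoin (Or.inl ⟨i, rfl⟩)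
    simpa [laurentY] using sub_mem (hX i) hY
  induction k using Finsupp.induction_linear with
  | zero => exact one_mem L
  | add k l hk hl => simpa [AddMonoidAlgebra.single_mul_single] using mul_mem hk hl
  | single i z =>
    obtain ⟨m, rfl | rfl⟩ := z.eq_nat_or_neg
    · simpa [laurentX, AddMonoidAlgebra.single_pow] using pow_mem (hX i) m
    · simpa [laurentXInv, AddMonoidAlgebra.single_pow] using pow_mem (hXInv i) m

theorem adjoin_laurentY_laurentX_eq_top :
    Algebra.adjoin R (Set.range (laurentY R (ι := ι)) ∪ Set.range (laurentX R)) = ⊤ := by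
  refine eq_top_iff.mpr fun f _ => ?_
  induction f using AddMonoidAlgebra.induction_linear with
  | zero => exact zero_mem _
  | add f g hf hg => exact add_mem (hf trivial) (hg trivial)
  | single k c => simpa using Subalgebra.smul_mem _ (single_mem_adjoin_laurentY_laurentX k) c

theorem map_laurentXInv_eq {A : Type*} [CommRing A] [Algebra R A] {T : R[ι →₀ ℤ] →ₐ[R] A} {i : ι}
    {u : A} (hu : T (laurentX R i) * u = 1) :
    T (laurentXInv R i) = u := by
  refine left_inv_eq_right_inv ?_ hu
  rw [mul_comm, ← map_mul, laurentX_mul_laurentXInv, map_one]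

theorem map_laurentY_of_map_laurentX {κ : Type*} {T : R[ι →₀ ℤ] →ₐ[R] R[κ →₀ ℤ]} {i : ι} {j : κ}
    (hT : T (laurentX R i) = laurentX R j) : T (laurentY R i) = laurentY R j := by
  have hInv : T (laurentXInv R i) = laurentXInv R j :=
    map_laurentXInv_eq (hT ▸ laurentX_mul_laurentXInv j)
  rw [laurentY, map_sub, hT, hInv, laurentY]

theorem map_laurentY_of_map_laurentX_eq_neg {κ : Type*} {T : R[ι →₀ ℤ] →ₐ[R] R[κ →₀ ℤ]} {i : ι}
    {j : κ} (hT : T (laurentX R i) = -laurentXInv R j) : T (laurentY R i) = laurentY R j := by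
  have hInv : T (laurentXInv R i) = -laurentX R j :=
    map_laurentXInv_eq (by rw [hT]; linear_combination laurentX_mul_laurentXInv (R := R) j)
  rw [laurentY, map_sub, hT, hInv, laurentY]
  ring

/-- The endomorphism `T` acts on the variables as the `i`-th sign generator of the hyperoctahedral
group: it sends `xᵢ` to `-xᵢ⁻¹` and fixes the other variables. -/
def IsSignChange (T : R[ι →₀ ℤ] →ₐ[R] R[ι →₀ ℤ]) (i : ι) : Prop :=
  T (laurentX R i) = -laurentXInv R i ∧ ∀ j, j ≠ i → T (laurentX R j) = laurentX R j

namespace IsSignChange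

variable {T : R[ι →₀ ℤ] →ₐ[R] R[ι →₀ ℤ]} {i : ι}

theorem map_laurentY (hT : IsSignChange T i) (j : ι) : T (laurentY R j) = laurentY R j := by
  rcases eq_or_ne j i with rfl | hj
  · exact map_laurentY_of_map_laurentX_eq_neg hT.1
  · exact map_laurentY_of_map_laurentX (hT.2 j hj)

theorem map_eq_self_of_mem_adjoin (hT : IsSignChange T i) {S : Set ι} (hi : i ∉ S)
    {f : R[ι →₀ ℤ]} (hf : f ∈ Algebra.adjoin R (Set.range (laurentY R) ∪ laurentX R '' S)) :
    T f = f := by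
  refine AlgHom.adjoin_le_equalizer T (AlgHom.id R _) ?_ hf
  rintro _ (⟨j, rfl⟩ | ⟨j, hj, rfl⟩)
  · exact hT.map_laurentY j
  · exact hT.2 j (ne_of_mem_of_not_mem hj hi)

theorem eq_zero_of_mul_map_laurentX_sub_eq_zero (hT : IsSignChange T i) {b : R[ι →₀ ℤ]}
    (hb : b * (T (laurentX R i) - laurentX R i) = 0) : b = 0 := by
  refine (hasTopMonomial_laurentX_add_smul_laurentXInv (1 : R) i).eq_zero_of_mul_eq_zero ?_
  rw [hT.1] at hb
  rw [one_smul]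
  linear_combination -hb

end IsSignChange

section SignChanges

variable {E : ι → R[ι →₀ ℤ] →ₐ[R] R[ι →₀ ℤ]}

theorem mem_adjoin_laurentY_of_mem_adjoin_union_image
    (hE : ∀ i, IsSignChange (E i) i) {f : R[ι →₀ ℤ]} (hf : ∀ i, E i f = f) (S : Finset ι)
    (hfS : f ∈ Algebra.adjoin R (Set.range (laurentY R) ∪ laurentX R '' S)) :
    f ∈ Algebra.adjoin R (Set.range (laurentY R)) := by
  classical
  induction S using Finset.induction_on with
  | empty => simpa using hfS
  | insert i S hi ih =>
    set B := Algebra.adjoin R (Set.range (laurentY R) ∪ laurentX R '' (S : Set ι))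
    have hfB : f ∈ Algebra.adjoin R (insert (laurentX R i) (B : Set _)) := by
      refine Algebra.adjoin_mono ?_ hfS
      rw [Finset.coe_insert, Set.image_insert_eq, Set.union_insert]
      exact Set.insert_subset_insert Algebra.subset_adjoin
    have hY : laurentY R i ∈ B := Algebra.subset_adjoin (Or.inl ⟨i, rfl⟩)
    exact ih <| mem_of_mem_adjoin_insert_of_fixed (one_mem B) hY (laurentX_sq i)
      (fun b hb => (hE i).map_eq_self_of_mem_adjoin (mod_cast hi) hb)
      (fun b hb => (hE i).eq_zero_of_mul_map_laurentX_sub_eq_zero hb) hfB (hf i)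

theorem mem_adjoin_laurentY_iff_signChange_fixed [Finite ι]
    (hE : ∀ i, IsSignChange (E i) i) {f : R[ι →₀ ℤ]} :
    f ∈ Algebra.adjoin R (Set.range (laurentY R)) ↔ ∀ i, E i f = f := by
  refine ⟨fun hf i => ?_, fun hf => ?_⟩
  · exact (hE i).map_eq_self_of_mem_adjoin (S := ∅) (Set.notMem_empty i) (by simpa using hf)
  · cases nonempty_fintype ι
    refine mem_adjoin_laurentY_of_mem_adjoin_union_image hE hf Finset.univ ?_
    simp [adjoin_laurentY_laurentX_eq_top]

end SignChanges

end Laurent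

theorem invariants_Bn_general {R ι : Type*} [CommRing R] [Fintype ι] {n : ℕ}
    (hn : Fintype.card ι = n)
    (P : Equiv.Perm ι → R[ι →₀ ℤ] →ₐ[R] R[ι →₀ ℤ])
    (hP : ∀ σ j, P σ (laurentX R j) = laurentX R (σ j))
    (E : ι → R[ι →₀ ℤ] →ₐ[R] R[ι →₀ ℤ])
    (hE : ∀ i, IsSignChange (E i) i) :
    {f : R[ι →₀ ℤ] | (∀ σ, P σ f = f) ∧ (∀ i, E i f = f)} =
      (Algebra.adjoin R (Set.range fun i : Fin n => aeval (laurentY R) (esymm ι R (i + 1))) :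
        Set R[ι →₀ ℤ]) ∧
    AlgebraicIndependent R fun i : Fin n => aeval (laurentY R) (esymm ι R (i + 1)) := by
  have hY : AlgebraicIndependent R (laurentY R (ι := ι)) := algebraicIndependent_laurentY
  refine ⟨?_, algebraicIndependent_aeval_esymm hY hn.ge⟩
  ext f
  rw [SetLike.mem_coe, adjoin_range_aeval_esymm _ hn.le,
    mem_map_symmetricSubalgebra_iff_fixed hY fun σ i => map_laurentY_of_map_laurentX (hP σ i),
    mem_adjoin_laurentY_iff_signChange_fixed hE, and_comm, Set.mem_ofPred_eq]

theorem sB_eq_aeval_esymm {n : ℕ} (i : Fin n) :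
    sB i = aeval (laurentY ℂ) (esymm (Fin n) ℂ (i + 1)) := by
  simp [sB, esymm, laurentY, laurentX, laurentXInv, Xvar, Xinv]

/-- The invariants of the Laurent polynomial ring under the hyperoctahedral group
`Bₙ = (ℤ/2ℤ)ⁿ ⋊ Sₙ`, where `Sₙ` permutes the variables and the `i`-th sign generator sends
`xᵢ` to `-xᵢ⁻¹`, form the polynomial algebra on the algebraically independent elements
`sᵢ = eᵢ(x₁ - x₁⁻¹, …, xₙ - xₙ⁻¹)`, `i = 1, …, n`. -/
theorem invariants_Bn (n : ℕ) (hn : 1 ≤ n)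
    (P : Equiv.Perm (Fin n) → (LaurentAlg n ≃ₐ[ℂ] LaurentAlg n))
    (hP : ∀ σ j, P σ (Xvar j) = Xvar (σ j))
    (E : Fin n → (LaurentAlg n ≃ₐ[ℂ] LaurentAlg n))
    (hE : ∀ i, E i (Xvar i) = -Xinv i ∧ ∀ j, j ≠ i → E i (Xvar j) = Xvar j) :
    {f : LaurentAlg n | (∀ σ, P σ f = f) ∧ (∀ i, E i f = f)} =
      (Algebra.adjoin ℂ (Set.range (sB (n := n))) : Set (LaurentAlg n)) ∧
    AlgebraicIndependent ℂ (sB (n := n)) := by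
  rw [funext sB_eq_aeval_esymm]
  exact invariants_Bn_general (Fintype.card_fin n) (fun σ => (P σ).toAlgHom) hP
    (fun i => (E i).toAlgHom) hE

end
end

section
/- Let n ≥ 2 and let L = ℂ[x_1^{±1}, …, x_n^{±1}] be the ring of Laurent polynomials in n variables over ℂ. Let D_n be the group generated by the permutation action of S_n on the variables together with all transformations that invert an even number of variables (i.e. semidirect product of S_n with the subgroup of (ℤ/2ℤ)^n of sign vectors with trivial product), acting by ℂ-algebra automorphisms where a sign vector (d_1,…,d_n) with Σd_i even sends x_i to x_i^{-1} exactly when d_i = 1. Set s_i = e_i(x_1 + x_1^{-1}, …, x_n + x_n^{-1}) for i = 1, …, n-1, and Δ_n^± = (1/2)·(∏_{i=1}^n (x_i + x_i^{-1}) ± ∏_{i=1}^n (x_i - x_i^{-1})). Then the invariant ring L^{D_n} equals the ℂ-subalgebra generated by s_1, …, s_{n-1}, Δ_n^+ and Δ_n^-. -/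
noncomputable section

/-- `s_k = e_k(x₁ + x₁⁻¹, …, xₙ + xₙ⁻¹)`, the `k`-th elementary symmetric polynomial
in the elements `xⱼ + xⱼ⁻¹`. -/
def sD {n : ℕ} (k : ℕ) : LaurentAlg n :=
  ∑ t ∈ Finset.powersetCard k Finset.univ, ∏ j ∈ t, (Xvar j + Xinv j)

/-- `Δₙ⁺ = (1/2)(∏ᵢ (xᵢ + xᵢ⁻¹) + ∏ᵢ (xᵢ - xᵢ⁻¹))`. -/
def deltaPlus (n : ℕ) : LaurentAlg n :=
  algebraMap ℂ (LaurentAlg n) (1 / 2) *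
    (∏ i : Fin n, (Xvar i + Xinv i) + ∏ i : Fin n, (Xvar i - Xinv i))

/-- `Δₙ⁻ = (1/2)(∏ᵢ (xᵢ + xᵢ⁻¹) - ∏ᵢ (xᵢ - xᵢ⁻¹))`. -/
def deltaMinus (n : ℕ) : LaurentAlg n :=
  algebraMap ℂ (LaurentAlg n) (1 / 2) *
    (∏ i : Fin n, (Xvar i + Xinv i) - ∏ i : Fin n, (Xvar i - Xinv i))

/-!
Write `yᵢ = xᵢ + xᵢ⁻¹` and `zᵢ = xᵢ - xᵢ⁻¹`. The Chebyshev polynomials satisfy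
`C_k(yᵢ) = xᵢ ^ k + xᵢ ^ (-k)` and `zᵢ * S_{k-1}(yᵢ) = xᵢ ^ k - xᵢ ^ (-k)`. Hence the sum of the
images of a monomial `x ^ m` under all sign vectors is `∏ C_{mᵢ}(yᵢ)`, and the alternating sum is
`(∏ zᵢ) * ∏ S_{mᵢ-1}(yᵢ)`. Adding the two leaves twice the sum over the even sign vectors, so a
multiple of an invariant `f` has the form `P(y) + (∏ zᵢ) * Q(y)`, where `P` and `Q` depend linearly
and permutation-equivariantly on `f`. They are therefore symmetric, hence polynomials in the
elementary symmetric ones, while `∏ yᵢ = Δ⁺ + Δ⁻` and `∏ zᵢ = Δ⁺ - Δ⁻`.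
-/

open Finset Polynomial

/-- The Laurent polynomial ring over `R` in variables indexed by `ι`, as the group algebra of
`ℤ^ι`; `LaurentAlg n` is `MvLaurent (Fin n) ℂ`. -/
abbrev MvLaurent (ι R : Type*) [CommRing R] := AddMonoidAlgebra R (ι →₀ ℤ)

section Chebyshev

variable {R A : Type*} [CommRing R] [CommRing A] [Algebra R A]

theorem aeval_chebyshevC_add_inv (u : Aˣ) (k : ℤ) :
    aeval (u + ↑u⁻¹ : A) (Chebyshev.C R k) = ↑(u ^ k) + ↑(u ^ (-k)) := by
  induction k using Chebyshev.induct' with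
  | zero => rw [Chebyshev.C_zero, map_ofNat, neg_zero, zpow_zero, Units.val_one, one_add_one_eq_two]
  | one => simp
  | add_two k ih₁ ih₀ =>
    rw [Chebyshev.C_add_two, map_sub, map_mul, aeval_X, ih₁, ih₀, add_mul, mul_add, mul_add]
    simp only [← Units.val_mul, ← zpow_one_add, ← zpow_neg_one, ← zpow_add]
    ring_nf
  | neg k ih => rw [Chebyshev.C_neg, ih, neg_neg, add_comm]

theorem sub_inv_mul_aeval_chebyshevS (u : Aˣ) (k : ℤ) :
    (u - ↑u⁻¹ : A) * aeval (u + ↑u⁻¹ : A) (Chebyshev.S R (k - 1)) = ↑(u ^ k) - ↑(u ^ (-k)) := by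
  induction k using Chebyshev.induct' with
  | zero => simp
  | one => simp
  | add_two k ih₁ ih₀ =>
    have hS : Chebyshev.S R (k + 2 - 1) =
        X * Chebyshev.S R (k + 1 - 1) - Chebyshev.S R (k - 1) := by
      rw [add_sub_cancel_right, ← Chebyshev.S_add_one]
      ring_nf
    rw [hS, map_sub, map_mul, aeval_X, mul_sub, mul_left_comm, ih₁, ih₀, add_mul, mul_sub, mul_sub]
    simp only [← Units.val_mul, ← zpow_one_add, ← zpow_neg_one, ← zpow_add]
    ring_nf
  | neg k ih => rw [Chebyshev.S_neg_sub_one, map_neg, mul_neg, ih, neg_neg, neg_sub]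

end Chebyshev

theorem sum_pow_card_mul_prod_ite {ι A : Type*} [Fintype ι] [DecidableEq ι] [CommSemiring A]
    (c : A) (a b : ι → A) :
    ∑ d : ι → Bool, c ^ #{i | d i} * ∏ i, (if d i then b i else a i) = ∏ i, (a i + c * b i) := by
  have expand := Fintype.prod_sum fun i (e : Bool) => (if e then c else 1) * if e then b i else a i
  simp only [Fintype.sum_bool, prod_mul_distrib] at expand
  simpa [prod_ite, add_comm] using expand.symm

-- The summand `0 ^ n` is `1` for `n = 0`, where the identity is the only sign vector.
theorem isUnit_two_pow_add_zero_pow {R : Type*} [CommSemiring R] [Invertible (2 : R)] (n : ℕ) :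
    IsUnit (2 ^ n + 0 ^ n : R) := by
  have two_isUnit : IsUnit (2 : R) := isUnit_of_invertible 2
  rcases eq_or_ne n 0 with rfl | hn
  · simpa [one_add_one_eq_two] using two_isUnit
  · simpa [hn] using two_isUnit.pow n

namespace MvLaurent

variable {ι R : Type*} [CommRing R]

variable (R) in
/-- The variable `xᵢ`, as a unit so that `x R i ^ k` makes sense for every integer `k`. -/
def x (i : ι) : (MvLaurent ι R)ˣ where
  val := AddMonoidAlgebra.single (Finsupp.single i 1) 1
  inv := AddMonoidAlgebra.single (Finsupp.single i (-1)) 1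
  val_inv := by simp [AddMonoidAlgebra.single_mul_single, AddMonoidAlgebra.one_def]
  inv_val := by simp [AddMonoidAlgebra.single_mul_single, AddMonoidAlgebra.one_def]

/-- `xᵢ + xᵢ⁻¹`, which is fixed by inverting `xᵢ`. -/
def xAddInv (i : ι) : MvLaurent ι R := x R i + ↑(x R i)⁻¹

/-- `xᵢ - xᵢ⁻¹`, which changes sign when `xᵢ` is inverted. -/
def xSubInv (i : ι) : MvLaurent ι R := x R i - ↑(x R i)⁻¹

theorem val_x_zpow (i : ι) (k : ℤ) :
    (↑(x R i ^ k) : MvLaurent ι R) = AddMonoidAlgebra.single (Finsupp.single i k) 1 := by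
  have x_eq : x R i = Units.map (AddMonoidAlgebra.of R (ι →₀ ℤ))
      (toUnits (Multiplicative.ofAdd (Finsupp.single i 1))) := Units.ext rfl
  rw [x_eq, ← map_zpow, ← map_zpow, ← ofAdd_zsmul, Finsupp.smul_single_one]
  rfl

theorem single_one_eq_prod_x_zpow [Fintype ι] (m : ι →₀ ℤ) :
    (AddMonoidAlgebra.single m 1 : MvLaurent ι R) = ∏ i, ↑(x R i ^ m i) := by
  have of_sum := map_prod (AddMonoidAlgebra.of R (ι →₀ ℤ))
    (fun i => Multiplicative.ofAdd (Finsupp.single i (m i))) univ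
  rw [← ofAdd_sum, Finsupp.univ_sum_single] at of_sum
  simpa only [val_x_zpow, AddMonoidAlgebra.of_apply, toAdd_ofAdd] using of_sum

section SignedPermutations

/-- `g` is the algebra automorphism that permutes the variables by `σ` and inverts those marked
by `d`, i.e. the action of the element `(d, σ)` of the hyperoctahedral group. -/
def IsSignedPerm (g : MvLaurent ι R ≃ₐ[R] MvLaurent ι R) (σ : Equiv.Perm ι) (d : ι → Bool) :
    Prop :=
  ∀ j, g (x R j) = if d j then ↑(x R (σ j))⁻¹ else ↑(x R (σ j))

namespace IsSignedPerm

variable {g : MvLaurent ι R ≃ₐ[R] MvLaurent ι R} {σ : Equiv.Perm ι} {d : ι → Bool}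

theorem map_x_inv (hg : IsSignedPerm g σ d) (j : ι) :
    g ↑(x R j)⁻¹ = if d j then ↑(x R (σ j)) else ↑(x R (σ j))⁻¹ := by
  have hx : Units.map (g : MvLaurent ι R →* MvLaurent ι R) (x R j) =
      if d j then (x R (σ j))⁻¹ else x R (σ j) := by
    ext1
    rw [apply_ite Units.val]
    exact hg j
  have hinv := congrArg (fun u : (MvLaurent ι R)ˣ => (↑u⁻¹ : MvLaurent ι R)) hx
  rw [← map_inv] at hinv
  refine hinv.trans ?_
  split_ifs <;> simp

theorem map_xAddInv (hg : IsSignedPerm g σ d) (j : ι) : g (xAddInv j) = xAddInv (σ j) := by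
  rw [xAddInv, map_add, hg j, hg.map_x_inv j, xAddInv]
  split_ifs
  · exact add_comm _ _
  · rfl

theorem map_xSubInv (hg : IsSignedPerm g σ d) (j : ι) :
    g (xSubInv j) = (if d j then -1 else 1) * xSubInv (σ j) := by
  rw [xSubInv, map_sub, hg j, hg.map_x_inv j, xSubInv]
  split_ifs <;> ring

theorem map_aeval_xAddInv (hg : IsSignedPerm g σ d) (p : MvPolynomial ι R) :
    g (MvPolynomial.aeval xAddInv p) = MvPolynomial.aeval xAddInv (MvPolynomial.rename σ p) := by
  rw [MvPolynomial.aeval_rename]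
  refine (MvPolynomial.comp_aeval_apply _ (g : MvLaurent ι R →ₐ[R] MvLaurent ι R) p).trans ?_
  exact congrArg (MvPolynomial.aeval · p) (funext hg.map_xAddInv)

variable [Fintype ι]

theorem map_prod_xAddInv (hg : IsSignedPerm g σ d) : g (∏ i, xAddInv i) = ∏ i, xAddInv i := by
  simp only [map_prod, hg.map_xAddInv]
  exact Equiv.prod_comp σ xAddInv

theorem map_prod_xSubInv (hg : IsSignedPerm g σ d) (hd : Even #{i | d i}) :
    g (∏ i, xSubInv i) = ∏ i, xSubInv i := by
  have sign_eq_one : ∏ i, (if d i then (-1 : MvLaurent ι R) else 1) = 1 := by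
    simp [prod_ite, hd.neg_one_pow]
  simp only [map_prod, hg.map_xSubInv, prod_mul_distrib, sign_eq_one, one_mul]
  exact Equiv.prod_comp σ xSubInv

end IsSignedPerm

/-- The algebra automorphism sending `x R i` to `x R (σ i)`. -/
def permute (σ : Equiv.Perm ι) : MvLaurent ι R ≃ₐ[R] MvLaurent ι R :=
  AddMonoidAlgebra.domCongr R R (Finsupp.domCongr σ)

theorem permute_single (σ : Equiv.Perm ι) (m : ι →₀ ℤ) (r : R) :
    permute σ (AddMonoidAlgebra.single m r) =
      AddMonoidAlgebra.single (Finsupp.equivMapDomain σ m) r :=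
  AddMonoidAlgebra.domCongr_single ..

theorem isSignedPerm_permute (σ : Equiv.Perm ι) :
    IsSignedPerm (permute σ : MvLaurent ι R ≃ₐ[R] MvLaurent ι R) σ fun _ => false := fun j => by
  simpa [x] using permute_single σ (Finsupp.single j 1) (1 : R)

variable [Fintype ι]

/-- The algebra automorphism inverting the variables marked by `d`. On exponents it changes the
sign of the marked coordinates. -/
def invert (d : ι → Bool) : MvLaurent ι R ≃ₐ[R] MvLaurent ι R :=
  let e := (Finsupp.linearEquivFunOnFinite ℤ ℤ ι).toAddEquiv
  AddMonoidAlgebra.domCongr R R <| (e.trans <|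
    AddEquiv.piCongrRight fun i => if d i then AddEquiv.neg ℤ else AddEquiv.refl ℤ).trans e.symm

theorem invert_single_one (d : ι → Bool) (m : ι →₀ ℤ) :
    invert d (AddMonoidAlgebra.single m 1 : MvLaurent ι R) =
      ∏ i, if d i then ↑(x R i ^ (-m i)) else ↑(x R i ^ m i) := by
  rw [invert, AddMonoidAlgebra.domCongr_single, single_one_eq_prod_x_zpow]
  refine prod_congr rfl fun i _ => ?_
  by_cases hi : d i <;> simp [hi]

theorem isSignedPerm_invert (d : ι → Bool) :
    IsSignedPerm (invert d : MvLaurent ι R ≃ₐ[R] MvLaurent ι R) 1 d := fun j => by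
  refine (invert_single_one d (Finsupp.single j 1)).trans ?_
  rw [prod_eq_single j (fun i _ hij => by simp [hij]) (by simp)]
  simp

end SignedPermutations

section ReplacePowers

variable [Fintype ι]

/-- The linear map sending each monomial `∏ xᵢ ^ mᵢ` to `∏ p_{mᵢ}(Yᵢ)`, a polynomial in new
variables `Yᵢ`, which will stand for `xᵢ + xᵢ⁻¹`. -/
def replacePowers (p : ℤ → R[X]) : MvLaurent ι R →ₗ[R] MvPolynomial ι R :=
  (AddMonoidAlgebra.basis (ι →₀ ℤ) R).constr R fun m => ∏ i, aeval (MvPolynomial.X i) (p (m i))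

theorem replacePowers_single_one (p : ℤ → R[X]) (m : ι →₀ ℤ) :
    replacePowers p (AddMonoidAlgebra.single m 1) = ∏ i, aeval (MvPolynomial.X i) (p (m i)) := by
  rw [replacePowers, ← AddMonoidAlgebra.basis_apply, Module.Basis.constr_basis]

theorem replacePowers_permute (p : ℤ → R[X]) (σ : Equiv.Perm ι) (f : MvLaurent ι R) :
    replacePowers p (permute σ f) = MvPolynomial.rename σ (replacePowers p f) := by
  suffices h : replacePowers p ∘ₗ (permute σ).toLinearMap =
      (MvPolynomial.rename σ).toLinearMap ∘ₗ replacePowers p from LinearMap.congr_fun h f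
  refine (AddMonoidAlgebra.basis (ι →₀ ℤ) R).ext fun m => ?_
  simp only [LinearMap.comp_apply, AddMonoidAlgebra.basis_apply, AlgEquiv.toLinearMap_apply,
    AlgHom.toLinearMap_apply, permute_single, replacePowers_single_one, map_prod,
    ← Polynomial.aeval_algHom_apply, MvPolynomial.rename_X]
  rw [← Equiv.prod_comp σ]
  simp

theorem isSymmetric_replacePowers (p : ℤ → R[X]) {f : MvLaurent ι R}
    (hf : ∀ σ : Equiv.Perm ι, permute σ f = f) : (replacePowers p f).IsSymmetric := fun σ => by
  rw [← replacePowers_permute, hf]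

theorem aeval_replacePowers_single_one (p : ℤ → R[X]) (m : ι →₀ ℤ) :
    MvPolynomial.aeval xAddInv (replacePowers p (AddMonoidAlgebra.single m 1)) =
      ∏ i, aeval (xAddInv i : MvLaurent ι R) (p (m i)) := by
  simp only [replacePowers_single_one, map_prod, ← Polynomial.aeval_algHom_apply,
    MvPolynomial.aeval_X]

section SumOverSigns

variable [DecidableEq ι]

theorem sum_smul_invert_single_one (c : R) (m : ι →₀ ℤ) :
    ∑ d : ι → Bool, c ^ #{i | d i} • invert d (AddMonoidAlgebra.single m 1) =
      ∏ i, (↑(x R i ^ m i) + c • ↑(x R i ^ (-m i)) : MvLaurent ι R) := by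
  simp only [invert_single_one, Algebra.smul_def, map_pow]
  exact sum_pow_card_mul_prod_ite _ _ _

theorem sum_invert_eq_aeval (f : MvLaurent ι R) :
    ∑ d : ι → Bool, invert d f =
      MvPolynomial.aeval xAddInv (replacePowers (Chebyshev.C R) f) := by
  suffices h : ∑ d : ι → Bool, (invert d).toLinearMap =
      (MvPolynomial.aeval xAddInv).toLinearMap ∘ₗ replacePowers (Chebyshev.C R) by
    simpa using LinearMap.congr_fun h f
  refine (AddMonoidAlgebra.basis (ι →₀ ℤ) R).ext fun m => ?_
  have hm := sum_smul_invert_single_one (1 : R) m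
  simp only [one_pow, one_smul] at hm
  simp only [LinearMap.sum_apply, LinearMap.comp_apply, AddMonoidAlgebra.basis_apply,
    AlgEquiv.toLinearMap_apply, AlgHom.toLinearMap_apply, aeval_replacePowers_single_one, hm,
    xAddInv, aeval_chebyshevC_add_inv]

theorem sum_sign_smul_invert_eq_mul_aeval (f : MvLaurent ι R) :
    ∑ d : ι → Bool, (-1 : R) ^ #{i | d i} • invert d f =
      (∏ i, xSubInv i) *
        MvPolynomial.aeval xAddInv (replacePowers (fun k => Chebyshev.S R (k - 1)) f) := by
  suffices h : ∑ d : ι → Bool, (-1 : R) ^ #{i | d i} • (invert d).toLinearMap =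
      LinearMap.mulLeft R (∏ i, xSubInv i) ∘ₗ (MvPolynomial.aeval xAddInv).toLinearMap ∘ₗ
        replacePowers (fun k => Chebyshev.S R (k - 1)) by
    simpa using LinearMap.congr_fun h f
  refine (AddMonoidAlgebra.basis (ι →₀ ℤ) R).ext fun m => ?_
  have hm := sum_smul_invert_single_one (-1 : R) m
  simp only [neg_one_smul, ← sub_eq_add_neg] at hm
  simp only [LinearMap.sum_apply, LinearMap.smul_apply, LinearMap.comp_apply,
    AddMonoidAlgebra.basis_apply, AlgEquiv.toLinearMap_apply, AlgHom.toLinearMap_apply,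
    LinearMap.mulLeft_apply, aeval_replacePowers_single_one, hm, ← prod_mul_distrib, xSubInv,
    xAddInv, sub_inv_mul_aeval_chebyshevS]

end SumOverSigns

theorem smul_eq_aeval_add_mul_aeval_of_invert_eq {f : MvLaurent ι R}
    (hf : ∀ d : ι → Bool, Even #{i | d i} → invert d f = f) :
    (2 ^ Fintype.card ι + 0 ^ Fintype.card ι : R) • f =
      MvPolynomial.aeval xAddInv (replacePowers (Chebyshev.C R) f) +
        (∏ i, xSubInv i) *
          MvPolynomial.aeval xAddInv (replacePowers (fun k => Chebyshev.S R (k - 1)) f) := by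
  classical
  have sum_pow_card (c : R) : ∑ d : ι → Bool, c ^ #{i | d i} = (1 + c) ^ Fintype.card ι := by
    simpa using sum_pow_card_mul_prod_ite (ι := ι) c 1 1
  have weight_smul (d : ι → Bool) :
      invert d f + (-1 : R) ^ #{i | d i} • invert d f = (1 + (-1 : R) ^ #{i | d i}) • f := by
    rcases Nat.even_or_odd #{i | d i} with even | odd
    · rw [hf d even, add_smul, one_smul]
    · simp [odd.neg_one_pow]
  have weight_sum : ∑ d : ι → Bool, (1 + (-1 : R) ^ #{i | d i}) =
      2 ^ Fintype.card ι + 0 ^ Fintype.card ι := by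
    rw [sum_add_distrib, sum_pow_card, add_neg_cancel]
    simp
  rw [← sum_invert_eq_aeval, ← sum_sign_smul_invert_eq_mul_aeval, ← sum_add_distrib,
    sum_congr rfl fun d _ => weight_smul d, ← sum_smul, weight_sum]

end ReplacePowers

section Generators

variable (ι R) [Fintype ι] [Invertible (2 : R)]

/-- `Δ⁺`, which is `deltaPlus n` for `ι = Fin n` and `R = ℂ`. -/
def deltaPos : MvLaurent ι R := (⅟2 : R) • (∏ i, xAddInv i + ∏ i, xSubInv i)

/-- `Δ⁻`, which is `deltaMinus n` for `ι = Fin n` and `R = ℂ`. -/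
def deltaNeg : MvLaurent ι R := (⅟2 : R) • (∏ i, xAddInv i - ∏ i, xSubInv i)

/-- The generators `s₁, …, s_{|ι|-1}, Δ⁺, Δ⁻` of the ring of invariants, where `s_k` is the `k`-th
elementary symmetric polynomial in the `xᵢ + xᵢ⁻¹`. -/
def generators : Set (MvLaurent ι R) :=
  (fun k => MvPolynomial.aeval xAddInv (MvPolynomial.esymm ι R k)) ''
    Set.Icc 1 (Fintype.card ι - 1) ∪ {deltaPos ι R, deltaNeg ι R}

theorem deltaPos_add_deltaNeg : deltaPos ι R + deltaNeg ι R = ∏ i, xAddInv i := by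
  rw [deltaPos, deltaNeg, ← smul_add, add_add_sub_cancel, ← two_smul R, invOf_smul_smul]

theorem deltaPos_sub_deltaNeg : deltaPos ι R - deltaNeg ι R = ∏ i, xSubInv i := by
  rw [deltaPos, deltaNeg, ← smul_sub, add_sub_sub_cancel, ← two_smul R, invOf_smul_smul]

theorem deltaPos_mem_adjoin_generators : deltaPos ι R ∈ Algebra.adjoin R (generators ι R) :=
  Algebra.subset_adjoin (by simp [generators])

theorem deltaNeg_mem_adjoin_generators : deltaNeg ι R ∈ Algebra.adjoin R (generators ι R) :=
  Algebra.subset_adjoin (by simp [generators])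

theorem prod_xSubInv_mem_adjoin_generators :
    ∏ i, xSubInv i ∈ Algebra.adjoin R (generators ι R) :=
  deltaPos_sub_deltaNeg ι R ▸
    sub_mem (deltaPos_mem_adjoin_generators ι R) (deltaNeg_mem_adjoin_generators ι R)

theorem aeval_esymm_mem_adjoin_generators {k : ℕ} (hk : 1 ≤ k) (hkι : k ≤ Fintype.card ι) :
    MvPolynomial.aeval xAddInv (MvPolynomial.esymm ι R k) ∈ Algebra.adjoin R (generators ι R) := by
  rcases hkι.lt_or_eq with lt | rfl
  · exact Algebra.subset_adjoin (Or.inl ⟨k, ⟨hk, by lia⟩, rfl⟩)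
  · have esymm_card : MvPolynomial.aeval xAddInv (MvPolynomial.esymm ι R (Fintype.card ι)) =
        ∏ i, (xAddInv i : MvLaurent ι R) := by
      simp [MvPolynomial.esymm, ← card_univ, powersetCard_self]
    rw [esymm_card, ← deltaPos_add_deltaNeg]
    exact add_mem (deltaPos_mem_adjoin_generators ι R) (deltaNeg_mem_adjoin_generators ι R)

variable {ι R}

theorem aeval_mem_adjoin_generators_of_isSymmetric {p : MvPolynomial ι R} (hp : p.IsSymmetric) :
    MvPolynomial.aeval xAddInv p ∈ Algebra.adjoin R (generators ι R) := by
  obtain ⟨q, hq⟩ := MvPolynomial.esymmAlgHom_surjective (σ := ι) R le_rfl ⟨p, hp⟩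
  have p_eq : p = MvPolynomial.aeval
      (fun i : Fin (Fintype.card ι) => MvPolynomial.esymm ι R (i + 1)) q := by
    rw [← MvPolynomial.esymmAlgHom_apply, hq]
  rw [p_eq, MvPolynomial.comp_aeval_apply]
  refine Algebra.adjoin_le (Set.range_subset_iff.2 fun i => ?_)
    ((MvPolynomial.aeval_range _).le ⟨q, rfl⟩)
  exact aeval_esymm_mem_adjoin_generators ι R (by lia) (by lia)

theorem IsSignedPerm.apply_eq_of_mem_adjoin_generators {g : MvLaurent ι R ≃ₐ[R] MvLaurent ι R}
    {σ : Equiv.Perm ι} {d : ι → Bool} (hg : IsSignedPerm g σ d) (hd : Even #{i | d i})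
    {f : MvLaurent ι R} (hf : f ∈ Algebra.adjoin R (generators ι R)) : g f = f := by
  suffices h : Algebra.adjoin R (generators ι R) ≤
      AlgHom.equalizer (g : MvLaurent ι R →ₐ[R] MvLaurent ι R) (AlgHom.id R _) from h hf
  refine Algebra.adjoin_le ?_
  rintro _ (⟨k, -, rfl⟩ | rfl | rfl)
  · exact (hg.map_aeval_xAddInv _).trans (by rw [MvPolynomial.rename_esymm]; rfl)
  · simp [deltaPos, hg.map_prod_xAddInv, hg.map_prod_xSubInv hd]
  · simp [deltaNeg, hg.map_prod_xAddInv, hg.map_prod_xSubInv hd]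

theorem mem_adjoin_generators_of_invariant {f : MvLaurent ι R}
    (hperm : ∀ σ : Equiv.Perm ι, permute σ f = f)
    (hinvert : ∀ d : ι → Bool, Even #{i | d i} → invert d f = f) :
    f ∈ Algebra.adjoin R (generators ι R) := by
  obtain ⟨u, hu⟩ := isUnit_two_pow_add_zero_pow (R := R) (Fintype.card ι)
  have smul_mem : (u : R) • f ∈ Algebra.adjoin R (generators ι R) := by
    rw [hu, smul_eq_aeval_add_mul_aeval_of_invert_eq hinvert]
    have aeval_mem (p : ℤ → R[X]) := aeval_mem_adjoin_generators_of_isSymmetric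
      (isSymmetric_replacePowers p hperm)
    exact add_mem (aeval_mem _) (mul_mem (prod_xSubInv_mem_adjoin_generators ι R) (aeval_mem _))
  simpa [smul_smul] using Subalgebra.smul_mem _ smul_mem (↑u⁻¹ : R)

end Generators

end MvLaurent

open MvLaurent in
theorem invariants_Dn_general (ι R : Type*) [Fintype ι] [CommRing R] [Invertible (2 : R)] :
    {f : MvLaurent ι R |
      ∀ (σ : Equiv.Perm ι) (d : ι → Bool), Even #{i | d i} →
        ∀ g : MvLaurent ι R ≃ₐ[R] MvLaurent ι R, IsSignedPerm g σ d → g f = f} =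
    (Algebra.adjoin R (generators ι R) : Set (MvLaurent ι R)) := by
  refine Set.Subset.antisymm (fun f hf => ?_)
    fun f hf σ d hd g hg => hg.apply_eq_of_mem_adjoin_generators hd hf
  exact mem_adjoin_generators_of_invariant (fun σ => hf σ _ (by simp) _ (isSignedPerm_permute σ))
    fun d hd => hf 1 d hd _ (isSignedPerm_invert d)

theorem generators_fin_complex (n : ℕ) :
    MvLaurent.generators (Fin n) ℂ =
      (sD (n := n) '' Set.Icc 1 (n - 1)) ∪ {deltaPlus n, deltaMinus n} := by
  simp only [MvLaurent.generators, MvLaurent.deltaPos, MvLaurent.deltaNeg, MvPolynomial.esymm,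
    map_sum, map_prod, MvPolynomial.aeval_X, Fintype.card_fin, Algebra.smul_def, invOf_eq_inv,
    ← one_div]
  rfl

/-- The invariants of the Laurent polynomial ring under the group `Dₙ`
(the semidirect product of `Sₙ` with the even sign vectors in `(ℤ/2ℤ)ⁿ`, where a sign
vector inverts the corresponding variables and `Sₙ` permutes them) form the `ℂ`-subalgebra
generated by `s₁, …, s_{n-1}, Δₙ⁺, Δₙ⁻`. -/
theorem invariants_Dn (n : ℕ) (hn : 2 ≤ n) :
    {f : LaurentAlg n |
      ∀ (σ : Equiv.Perm (Fin n)) (d : Fin n → Bool),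
        Even (Finset.univ.filter (fun i => d i = true)).card →
        ∀ g : LaurentAlg n ≃ₐ[ℂ] LaurentAlg n,
          (∀ j, g (Xvar j) = if d j then Xinv (σ j) else Xvar (σ j)) → g f = f} =
    (Algebra.adjoin ℂ
        ((sD (n := n) '' Set.Icc 1 (n - 1)) ∪ {deltaPlus n, deltaMinus n}) :
      Set (LaurentAlg n)) := by
  rw [← generators_fin_complex]
  exact invariants_Dn_general (Fin n) ℂ

end
end

section
/- Let n ≥ 2 and in the Laurent polynomial ring L = ℂ[x_1^{±1}, …, x_n^{±1}] set s_i = e_i(x_1 + x_1^{-1}, …, x_n + x_n^{-1}) for i = 1, …, n, and Δ_n^± = (1/2)·(∏_{i=1}^n (x_i + x_i^{-1}) ± ∏_{i=1}^n (x_i - x_i^{-1})), so that s_n = Δ_n^+ + Δ_n^-. Then there exist elements p_0 and p_1 of the ℂ-subalgebra of L generated by s_1, …, s_{n-1} such that Δ_n^+ · Δ_n^- = p_1 + s_n · p_0. -/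
noncomputable section

/-!
Put `wᵢ = xᵢ + xᵢ⁻¹`, so that `(xᵢ - xᵢ⁻¹)² = wᵢ² - 4 = (wᵢ + 2)(wᵢ - 2)`. For a scalar `c`, all
terms of `∏ (wᵢ + c) = ∑ₖ c^(n-k) sₖ` except the last lie in the subalgebra `B` generated by
`s₁, …, sₙ₋₁`, so `∏ (wᵢ ± 2) ∈ B + sₙ`. Hence `∏ (xᵢ - xᵢ⁻¹)²` is a monic quadratic polynomial in
`sₙ` over `B`, and its leading term cancels in `4 Δₙ⁺ Δₙ⁻ = sₙ² - ∏ (xᵢ - xᵢ⁻¹)²`.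
-/

section CommSemiring

variable {R A : Type*} [CommSemiring R] [CommSemiring A] [Algebra R A]

theorem esymm_zero (s : Multiset A) : s.esymm 0 = 1 := by
  simp [Multiset.esymm]

theorem esymm_card (s : Multiset A) : s.esymm s.card = s.prod := by
  simp [Multiset.esymm, Multiset.powersetCard_self]

theorem esymm_mem_adjoin_of_lt_card (s : Multiset A) {k : ℕ} (hk : k < s.card) :
    s.esymm k ∈ Algebra.adjoin R (s.esymm '' Set.Icc 1 (s.card - 1)) := by
  obtain rfl | k_pos := k.eq_zero_or_pos
  · rw [esymm_zero]
    exact one_mem _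
  · exact Algebra.subset_adjoin ⟨k, ⟨k_pos, Nat.le_sub_one_of_lt hk⟩, rfl⟩

theorem prod_map_add_const_eq_sum_esymm (s : Multiset A) (a : A) :
    (s.map (· + a)).prod = ∑ k ∈ Finset.range (s.card + 1), s.esymm k * a ^ (s.card - k) := by
  simpa [Polynomial.eval_multiset_prod, Polynomial.eval_finsetSum, add_comm] using
    congrArg (Polynomial.eval a) s.prod_X_add_C_eq_sum_esymm

theorem exists_mem_adjoin_esymm_prod_map_add_algebraMap (s : Multiset A) (c : R) :
    ∃ p ∈ Algebra.adjoin R (s.esymm '' Set.Icc 1 (s.card - 1)),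
      (s.map (· + algebraMap R A c)).prod = p + s.prod := by
  refine ⟨∑ k ∈ Finset.range s.card, s.esymm k * algebraMap R A c ^ (s.card - k),
    sum_mem fun k hk ↦ mul_mem (esymm_mem_adjoin_of_lt_card s (Finset.mem_range.mp hk))
      (pow_mem (algebraMap_mem _ c) _), ?_⟩
  rw [prod_map_add_const_eq_sum_esymm, Finset.sum_range_succ, Nat.sub_self, pow_zero, mul_one,
    esymm_card]

end CommSemiring

section CommRing

variable {R A : Type*} [CommRing R] [CommRing A] [Algebra R A]

theorem exists_mem_adjoin_esymm_prod_map_sq_sub_algebraMap_sq (s : Multiset A) (c : R) :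
    ∃ p₀ ∈ Algebra.adjoin R (s.esymm '' Set.Icc 1 (s.card - 1)),
      ∃ p₁ ∈ Algebra.adjoin R (s.esymm '' Set.Icc 1 (s.card - 1)),
        (s.map fun a ↦ a ^ 2 - algebraMap R A c ^ 2).prod = s.prod ^ 2 + s.prod * p₀ + p₁ := by
  obtain ⟨p, hp, prod_add⟩ := exists_mem_adjoin_esymm_prod_map_add_algebraMap s c
  obtain ⟨q, hq, prod_sub⟩ := exists_mem_adjoin_esymm_prod_map_add_algebraMap s (-c)
  refine ⟨p + q, add_mem hp hq, p * q, mul_mem hp hq, ?_⟩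
  calc (s.map fun a ↦ a ^ 2 - algebraMap R A c ^ 2).prod
      = (s.map (· + algebraMap R A c)).prod * (s.map (· + algebraMap R A (-c))).prod := by
        simp only [← Multiset.prod_map_mul, sq_sub_sq, map_neg, ← sub_eq_add_neg]
    _ = s.prod ^ 2 + s.prod * (p + q) + p * q := by
        rw [prod_add, prod_sub]
        ring

theorem prod_sub_sq_eq_prod_add_sq_sub_two_sq {ι : Type*} (s : Finset ι) (x y : ι → A)
    (hxy : ∀ i ∈ s, x i * y i = 1) :
    (∏ i ∈ s, (x i - y i)) ^ 2 = ∏ i ∈ s, ((x i + y i) ^ 2 - 2 ^ 2) := by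
  rw [← Finset.prod_pow]
  refine Finset.prod_congr rfl fun i hi ↦ ?_
  linear_combination (-4) * hxy i hi

theorem deltaPlus_mul_deltaMinus_general {ι : Type*} [Invertible (2 : R)] (s : Finset ι)
    (x y : ι → A) (hxy : ∀ i ∈ s, x i * y i = 1) :
    let e : ℕ → A := (s.val.map fun i ↦ x i + y i).esymm
    let δPlus : A := algebraMap R A ⅟2 * (∏ i ∈ s, (x i + y i) + ∏ i ∈ s, (x i - y i))
    let δMinus : A := algebraMap R A ⅟2 * (∏ i ∈ s, (x i + y i) - ∏ i ∈ s, (x i - y i))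
    e s.card = δPlus + δMinus ∧
    ∃ p₀ p₁ : A,
      p₀ ∈ Algebra.adjoin R (e '' Set.Icc 1 (s.card - 1)) ∧
      p₁ ∈ Algebra.adjoin R (e '' Set.Icc 1 (s.card - 1)) ∧
      δPlus * δMinus = p₁ + e s.card * p₀ := by
  intro e δPlus δMinus
  have e_card : e s.card = ∏ i ∈ s, (x i + y i) := by
    simpa using esymm_card (s.val.map fun i ↦ x i + y i)
  have half_mul_two : algebraMap R A ⅟2 * 2 = 1 := by
    rw [← map_ofNat (algebraMap R A) 2, ← map_mul, invOf_mul_self, map_one]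
  obtain ⟨p₀, hp₀, p₁, hp₁, prod_sq_sub⟩ :=
    exists_mem_adjoin_esymm_prod_map_sq_sub_algebraMap_sq (s.val.map fun i ↦ x i + y i) (2 : R)
  have prod_sub_sq : (∏ i ∈ s, (x i - y i)) ^ 2 =
      (∏ i ∈ s, (x i + y i)) ^ 2 + (∏ i ∈ s, (x i + y i)) * p₀ + p₁ := by
    rw [prod_sub_sq_eq_prod_add_sq_sub_two_sq s x y hxy]
    simpa [map_ofNat (algebraMap R A) 2] using prod_sq_sub
  rw [Multiset.card_map, Finset.card_val] at hp₀ hp₁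
  rw [e_card]
  refine ⟨?_, -(⅟2 ^ 2 : R) • p₀, -(⅟2 ^ 2 : R) • p₁, Subalgebra.smul_mem _ hp₀ _,
    Subalgebra.smul_mem _ hp₁ _, ?_⟩
  · linear_combination (-∏ i ∈ s, (x i + y i)) * half_mul_two
  · simp only [Algebra.smul_def, map_neg, map_pow]
    linear_combination (-algebraMap R A ⅟2 ^ 2) * prod_sub_sq

end CommRing

theorem sD_eq_esymm {n : ℕ} :
    sD (n := n) = (Finset.univ.val.map fun i : Fin n ↦ Xvar i + Xinv i).esymm :=
  funext fun k ↦ (Finset.esymm_map_val _ _ k).symm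

theorem Xvar_mul_Xinv {n : ℕ} (i : Fin n) : Xvar i * Xinv i = 1 := by
  rw [Xvar, Xinv, AddMonoidAlgebra.single_mul_single, ← Finsupp.single_add, add_neg_cancel,
    Finsupp.single_zero, mul_one, AddMonoidAlgebra.one_def]

/-- One has `sₙ = Δₙ⁺ + Δₙ⁻`, and there are elements `p₀, p₁` of the `ℂ`-subalgebra
generated by `s₁, …, s_{n-1}` such that `Δₙ⁺ · Δₙ⁻ = p₁ + sₙ · p₀`. -/
theorem deltaPlus_mul_deltaMinus (n : ℕ) (hn : 2 ≤ n) :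
    sD (n := n) n = deltaPlus n + deltaMinus n ∧
    ∃ p₀ p₁ : LaurentAlg n,
      p₀ ∈ Algebra.adjoin ℂ (sD (n := n) '' Set.Icc 1 (n - 1)) ∧
      p₁ ∈ Algebra.adjoin ℂ (sD (n := n) '' Set.Icc 1 (n - 1)) ∧
      deltaPlus n * deltaMinus n = p₁ + sD (n := n) n * p₀ := by
  simpa [sD_eq_esymm, deltaPlus, deltaMinus] using
    deltaPlus_mul_deltaMinus_general (R := ℂ) Finset.univ Xvar Xinv fun i _ ↦ Xvar_mul_Xinv i

end
end

section
/- Let n ≥ 2 and let the group D_n (semidirect product of S_n with the even sign vectors in (ℤ/2ℤ)^n) act on the complex torus (ℂ^×)^n by: a permutation σ ∈ S_n sends (v_1,…,v_n) to (v_{σ^{-1}(1)},…,v_{σ^{-1}(n)}), and a sign vector (d_1,…,d_n) with Σd_i even sends v_i to v_i^{-1} exactly when d_i = 1. Let U be the set of points v ∈ (ℂ^×)^n such that v_i²·v_j² ≠ 1 for all 1 ≤ i ≤ j ≤ n and v_i² ≠ v_j² for all 1 ≤ i < j ≤ n. Then U is stable under the action of D_n, and the action of D_n on U is free: if g ∈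 D_n and v ∈ U satisfy g·v = v, then g is the identity. -/
/-!
Attach to `v` the `2n` group elements `vᵢᵏ` and `vᵢ⁻ᵏ`. For `k = 2`, the conditions defining `U` say
exactly that these are pairwise distinct, the case `i = j` of `vᵢ² vⱼ² ≠ 1` separating `vᵢ²` from
`vᵢ⁻²`. A signed permutation merely permutes these elements, so it preserves distinctness, and if it
fixes `v` then it permutes them trivially, which leaves only the identity.
-/

section SignedPermutations

variable {ι G : Type*}

/-- The family `vᵢ, vᵢ⁻¹` attached to `v`, indexed by `ι × Bool`, with `true` marking the
inverse. -/
def signedCoord [Inv G] (v : ι → G) (p : ι × Bool) : G :=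
  if p.2 then (v p.1)⁻¹ else v p.1

/-- The action on `ι → G` of the signed permutation with sign vector `d` and permutation `σ`:
permute the coordinates by `σ`, then invert those marked by `d`. -/
def signedPermAct [Inv G] (d : ι → Bool) (σ : Equiv.Perm ι) (v : ι → G) : ι → G :=
  fun i => if d i then (v (σ⁻¹ i))⁻¹ else v (σ⁻¹ i)

/-- The permutation of the signed indices `ι × Bool` through which the signed permutation `(d, σ)`
acts on families `signedCoord v`. Since it acts by precomposition, it involves `σ⁻¹`. -/
def signedIndexPerm (d : ι → Bool) (σ : Equiv.Perm ι) : Equiv.Perm (ι × Bool) :=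
  Equiv.prodShear σ⁻¹ fun i => if d i then Equiv.boolNot else Equiv.refl Bool

theorem signedIndexPerm_apply (d : ι → Bool) (σ : Equiv.Perm ι) (i : ι) (b : Bool) :
    signedIndexPerm d σ (i, b) = (σ⁻¹ i, b ^^ d i) := by
  cases hd : d i <;> simp [signedIndexPerm, hd]

theorem eq_one_of_signedIndexPerm_eq_one {d : ι → Bool} {σ : Equiv.Perm ι}
    (h : signedIndexPerm d σ = 1) : d = (fun _ => false) ∧ σ = 1 := by
  have image_eq (i : ι) : (σ⁻¹ i, false ^^ d i) = (i, false) := by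
    rw [← signedIndexPerm_apply, h, Equiv.Perm.one_apply]
  have sign_eq (i : ι) : d i = false := by simpa using congrArg Prod.snd (image_eq i)
  have inv_apply_eq (i : ι) : σ⁻¹ i = i := congrArg Prod.fst (image_eq i)
  exact ⟨funext sign_eq, inv_eq_one.mp (Equiv.ext inv_apply_eq)⟩

theorem signedCoord_signedPermAct [InvolutiveInv G] (d : ι → Bool) (σ : Equiv.Perm ι) (v : ι → G) :
    signedCoord (signedPermAct d σ v) = signedCoord v ∘ signedIndexPerm d σ := by
  funext ⟨i, b⟩
  cases hd : d i <;> cases b <;> simp [signedCoord, signedPermAct, signedIndexPerm_apply, hd]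

theorem signedPermAct_pow [DivisionMonoid G] (d : ι → Bool) (σ : Equiv.Perm ι) (v : ι → G)
    (k : ℕ) : signedPermAct d σ v ^ k = signedPermAct d σ (v ^ k) := by
  funext i
  cases hd : d i <;> simp [signedPermAct, hd]

theorem injective_signedCoord_signedPermAct [InvolutiveInv G] {v : ι → G}
    (hv : Function.Injective (signedCoord v)) (d : ι → Bool) (σ : Equiv.Perm ι) :
    Function.Injective (signedCoord (signedPermAct d σ v)) := by
  rw [signedCoord_signedPermAct]
  exact hv.comp (signedIndexPerm d σ).injective

theorem eq_one_of_signedPermAct_eq_self [InvolutiveInv G] {v : ι → G}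
    (hv : Function.Injective (signedCoord v)) {d : ι → Bool} {σ : Equiv.Perm ι}
    (hfix : signedPermAct d σ v = v) : d = (fun _ => false) ∧ σ = 1 := by
  have comp_eq : signedCoord v ∘ signedIndexPerm d σ = signedCoord v := by
    rw [← signedCoord_signedPermAct, hfix]
  exact eq_one_of_signedIndexPerm_eq_one (Equiv.ext fun p => hv (congrFun comp_eq p))

theorem injective_signedCoord_iff [Group G] {v : ι → G} :
    Function.Injective (signedCoord v) ↔ (∀ i j, v i * v j ≠ 1) ∧ Function.Injective v := by
  constructor
  · intro hv
    refine ⟨fun i j hij => ?_, fun i j hij => ?_⟩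
    · have index_eq : (i, false) = (j, true) := hv (eq_inv_of_mul_eq_one_left hij)
      simp at index_eq
    · have index_eq : (i, false) = (j, false) := hv hij
      exact congrArg Prod.fst index_eq
  · rintro ⟨mul_ne_one, v_injective⟩ ⟨i, _ | _⟩ ⟨j, _ | _⟩ hij
    · exact congrArg (·, false) (v_injective hij)
    · exact absurd (mul_eq_one_iff_eq_inv.mpr hij) (mul_ne_one i j)
    · exact absurd (inv_eq_iff_mul_eq_one.mp hij) (mul_ne_one i j)
    · exact congrArg (·, true) (v_injective (inv_injective hij))

theorem injective_signedCoord_iff_of_linearOrder [LinearOrder ι] [Group G] {v : ι → G} :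
    Function.Injective (signedCoord v) ↔
      (∀ i j, i ≤ j → v i * v j ≠ 1) ∧ (∀ i j, i < j → v i ≠ v j) := by
  rw [injective_signedCoord_iff]
  constructor
  · rintro ⟨mul_ne_one, v_injective⟩
    exact ⟨fun i j _ => mul_ne_one i j, fun i j hij => v_injective.ne hij.ne⟩
  · rintro ⟨mul_ne_one, ne_of_lt⟩
    refine ⟨fun i j => ?_, Function.Injective.of_lt_imp_ne ne_of_lt⟩
    rcases le_total i j with hij | hji
    · exact mul_ne_one i j hij
    · exact mt mul_eq_one_comm.mp (mul_ne_one j i hji)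

end SignedPermutations

theorem Dn_free_on_U_general {ι M : Type*} [LinearOrder ι] [Monoid M] (k : ℕ)
    (U : Set (ι → Mˣ))
    (hU : U = {v | (∀ i j : ι, i ≤ j → (v i : M) ^ k * (v j : M) ^ k ≠ 1) ∧
                   (∀ i j : ι, i < j → (v i : M) ^ k ≠ (v j : M) ^ k)})
    (act : (ι → Bool) → Equiv.Perm ι → (ι → Mˣ) → (ι → Mˣ))
    (hact : ∀ d σ v i, act d σ v i = if d i then (v (σ⁻¹ i))⁻¹ else v (σ⁻¹ i)) :
    (∀ (d : ι → Bool) (σ : Equiv.Perm ι), ∀ v ∈ U, act d σ v ∈ U) ∧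
    (∀ (d : ι → Bool) (σ : Equiv.Perm ι), ∀ v ∈ U, act d σ v = v →
      d = (fun _ => false) ∧ σ = 1) := by
  have mem_U_iff (v : ι → Mˣ) : v ∈ U ↔ Function.Injective (signedCoord (v ^ k)) := by
    simp [hU, injective_signedCoord_iff_of_linearOrder, Units.ext_iff]
  obtain rfl : act = signedPermAct := by
    funext d σ v i
    exact hact d σ v i
  simp only [mem_U_iff]
  refine ⟨fun d σ v hv => ?_, fun d σ v hv hfix => ?_⟩
  · rw [signedPermAct_pow]
    exact injective_signedCoord_signedPermAct hv d σ
  · refine eq_one_of_signedPermAct_eq_self hv ?_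
    rw [← signedPermAct_pow, hfix]

/-- The group `Dₙ` (semidirect product of `Sₙ` with the even sign vectors in `(ℤ/2ℤ)ⁿ`)
acts on the complex torus `(ℂ^×)ⁿ`: the element with even sign vector `d` and permutation
`σ` sends `v` to the point whose `i`-th coordinate is `(v_{σ⁻¹ i})⁻¹` if `d i` holds and
`v_{σ⁻¹ i}` otherwise.  The subset `U` of points with `vᵢ²·vⱼ² ≠ 1` for `i ≤ j` and
`vᵢ² ≠ vⱼ²` for `i < j` is stable under this action, and the action of `Dₙ` on `U` is
free. -/
theorem Dn_free_on_U (n : ℕ) (hn : 2 ≤ n)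
    (U : Set (Fin n → ℂˣ))
    (hU : U = {v | (∀ i j : Fin n, i ≤ j → ((v i : ℂ)) ^ 2 * ((v j : ℂ)) ^ 2 ≠ 1) ∧
                   (∀ i j : Fin n, i < j → ((v i : ℂ)) ^ 2 ≠ ((v j : ℂ)) ^ 2)})
    (act : (Fin n → Bool) → Equiv.Perm (Fin n) → (Fin n → ℂˣ) → (Fin n → ℂˣ))
    (hact : ∀ d σ v i, act d σ v i = if d i then (v (σ⁻¹ i))⁻¹ else v (σ⁻¹ i)) :
    (∀ (d : Fin n → Bool) (σ : Equiv.Perm (Fin n)),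
        Even (Finset.univ.filter (fun i => d i = true)).card →
        ∀ v ∈ U, act d σ v ∈ U) ∧
    (∀ (d : Fin n → Bool) (σ : Equiv.Perm (Fin n)),
        Even (Finset.univ.filter (fun i => d i = true)).card →
        ∀ v ∈ U, act d σ v = v → d = (fun _ => false) ∧ σ = 1) := by
  obtain ⟨stable, free⟩ := Dn_free_on_U_general 2 U hU act hact
  exact ⟨fun d σ _ => stable d σ, fun d σ _ => free d σ⟩
end
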